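/- Let k be a field, let Q be a connected finite acyclic non-Dynkin quiver with r vertices, let C be the adjacency matrix of the double quiver of Q, and let v = (v_i)_{i∈Q_0} ∈ k^{Q_0} be an arbitrary element. Then the quiver Heisenberg algebra ᵛΛ(Q), graded with all arrows of the double quiver in degree 1 and the central variable z in degree 2, has finite dimensional graded pieces and its matrix Hilbert series satisfies h_{ᵛΛ}(t)·(1 − Ct + t²·1)·(1 − t²) = 1 in the ring of r×r matrices over k[[t]]; equivalently h_{ᵛΛ}(t) = 1/((1 − Ct + t²)(1 − t²)). -/

import Mathlib

/-!
STATEMENT 6: Hilbert series of the quiver Heisenberg algebra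
`ᵛΛ(Q) = k[z]Q̄ / (ρ_i - v_i z e_i)` of a connected finite acyclic non-Dynkin
quiver: the graded pieces are finite dimensional and
`h_{ᵛΛ}(t) · (1 - C t + t²) · (1 - t²) = 1` over `k[[t]]`.

The algebra is presented as the quotient of the free algebra on generators
`e_i` (trivial paths, degree 0), `α`, `α*` (arrows of the double quiver,
degree 1) and a central variable `z` (degree 2) by the path-algebra
relations, the relations making `z` central, and the relations
`ρ_i = v_i z e_i`.
-/

/-- A finite quiver. -/
structure FinQuiver where
  r : ℕ
  Arrow : Type
  [instFintypeArrow : Fintype Arrow]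
  src : Arrow → Fin r
  tgt : Arrow → Fin r

attribute [instance] FinQuiver.instFintypeArrow

namespace FinQuiver

variable (Q : FinQuiver)

/-- The underlying graph of `Q` is connected. -/
def Connected : Prop :=
  ∀ i j : Fin Q.r, Relation.ReflTransGen
    (fun a b => ∃ e : Q.Arrow, (Q.src e = a ∧ Q.tgt e = b) ∨ (Q.src e = b ∧ Q.tgt e = a)) i j

/-- `Q` has no oriented cycles. -/
def Acyclic : Prop :=
  ∀ i : Fin Q.r, ¬ Relation.TransGen (fun a b => ∃ e : Q.Arrow, Q.src e = a ∧ Q.tgt e = b) i i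

/-- The Tits quadratic form of `Q` on `ℝ^{Q₀}`. -/
def titsForm (x : Fin Q.r → ℝ) : ℝ :=
  (∑ i, x i ^ 2) - ∑ e : Q.Arrow, x (Q.src e) * x (Q.tgt e)

/-- `Q` is Dynkin iff its Tits form is positive definite. -/
def IsDynkin : Prop := ∀ x : Fin Q.r → ℝ, x ≠ 0 → 0 < Q.titsForm x

/-- Adjacency matrix of `Q`. -/
def adjMatrix : Matrix (Fin Q.r) (Fin Q.r) ℕ := Matrix.of fun i j =>
  Fintype.card {e : Q.Arrow // Q.src e = i ∧ Q.tgt e = j}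

/-- Adjacency matrix `C` of the double quiver `Q̄`. -/
def doubleAdj : Matrix (Fin Q.r) (Fin Q.r) ℕ := Matrix.of fun i j =>
  Q.adjMatrix i j + Q.adjMatrix j i

end FinQuiver

/-- Generators for `k[z]Q̄`: trivial paths, arrows of the double quiver, and
the central variable `z`. -/
inductive QHGen (Q : FinQuiver) : Type
  | vert : Fin Q.r → QHGen Q
  | fwd : Q.Arrow → QHGen Q
  | bwd : Q.Arrow → QHGen Q
  | z : QHGen Q

/-- The mesh element `ρ_i = ∑_{src α = i} α α* - ∑_{tgt α = i} α* α`. -/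
noncomputable def qhMesh (k : Type) [Field k] (Q : FinQuiver) (i : Fin Q.r) :
    FreeAlgebra k (QHGen Q) :=
  (∑ e : Q.Arrow, if Q.src e = i then
      FreeAlgebra.ι k (QHGen.fwd e) * FreeAlgebra.ι k (QHGen.bwd e) else 0)
  - ∑ e : Q.Arrow, if Q.tgt e = i then
      FreeAlgebra.ι k (QHGen.bwd e) * FreeAlgebra.ι k (QHGen.fwd e) else 0

/-- Defining relations of the quiver Heisenberg algebra `ᵛΛ(Q)`:
path-algebra relations for `Q̄`, centrality of `z`, and `ρ_i = v_i z e_i`. -/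
inductive QHRel (k : Type) [Field k] (Q : FinQuiver) (v : Fin Q.r → k) :
    FreeAlgebra k (QHGen Q) → FreeAlgebra k (QHGen Q) → Prop
  | vert_idem (i : Fin Q.r) :
      QHRel k Q v (FreeAlgebra.ι k (QHGen.vert i) * FreeAlgebra.ι k (QHGen.vert i))
        (FreeAlgebra.ι k (QHGen.vert i))
  | vert_orth (i j : Fin Q.r) (h : i ≠ j) :
      QHRel k Q v (FreeAlgebra.ι k (QHGen.vert i) * FreeAlgebra.ι k (QHGen.vert j)) 0
  | vert_sum : QHRel k Q v (∑ i : Fin Q.r, FreeAlgebra.ι k (QHGen.vert i)) 1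
  | fwd_left (e : Q.Arrow) :
      QHRel k Q v (FreeAlgebra.ι k (QHGen.vert (Q.src e)) * FreeAlgebra.ι k (QHGen.fwd e))
        (FreeAlgebra.ι k (QHGen.fwd e))
  | fwd_right (e : Q.Arrow) :
      QHRel k Q v (FreeAlgebra.ι k (QHGen.fwd e) * FreeAlgebra.ι k (QHGen.vert (Q.tgt e)))
        (FreeAlgebra.ι k (QHGen.fwd e))
  | bwd_left (e : Q.Arrow) :
      QHRel k Q v (FreeAlgebra.ι k (QHGen.vert (Q.tgt e)) * FreeAlgebra.ι k (QHGen.bwd e))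
        (FreeAlgebra.ι k (QHGen.bwd e))
  | bwd_right (e : Q.Arrow) :
      QHRel k Q v (FreeAlgebra.ι k (QHGen.bwd e) * FreeAlgebra.ι k (QHGen.vert (Q.src e)))
        (FreeAlgebra.ι k (QHGen.bwd e))
  | central (g : QHGen Q) :
      QHRel k Q v (FreeAlgebra.ι k QHGen.z * FreeAlgebra.ι k g)
        (FreeAlgebra.ι k g * FreeAlgebra.ι k QHGen.z)
  | heisenberg (i : Fin Q.r) :
      QHRel k Q v (qhMesh k Q i)
        (v i • (FreeAlgebra.ι k QHGen.z * FreeAlgebra.ι k (QHGen.vert i)))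

/-- The quiver Heisenberg algebra `ᵛΛ(Q)`. -/
abbrev QHAlg (k : Type) [Field k] (Q : FinQuiver) (v : Fin Q.r → k) : Type :=
  RingQuot (QHRel k Q v)

/-- Image in `ᵛΛ(Q)` of a generator. -/
noncomputable def qhGen (k : Type) [Field k] (Q : FinQuiver) (v : Fin Q.r → k)
    (g : QHGen Q) : QHAlg k Q v :=
  RingQuot.mkAlgHom k (QHRel k Q v) (FreeAlgebra.ι k g)

/-- Degree of a generator: trivial paths 0, arrows 1, `z` 2. -/
def qhWt (Q : FinQuiver) : QHGen Q → ℕ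
  | .vert _ => 0
  | .fwd _ => 1
  | .bwd _ => 1
  | .z => 2

/-- The degree-`n` component `ᵛΛ(Q)_n`: span of images of weight-`n` monomials. -/
noncomputable def qhPiece (k : Type) [Field k] (Q : FinQuiver) (v : Fin Q.r → k)
    (n : ℕ) : Submodule k (QHAlg k Q v) :=
  Submodule.span k
    {x | ∃ l : List (QHGen Q), (l.map (qhWt Q)).sum = n ∧ x = (l.map (qhGen k Q v)).prod}

/-- The subspace `e_i ᵛΛ(Q)_n e_j`. -/
noncomputable def qhCorner (k : Type) [Field k] (Q : FinQuiver) (v : Fin Q.r → k)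
    (n : ℕ) (i j : Fin Q.r) : Submodule k (QHAlg k Q v) :=
  (qhPiece k Q v n).map
    ((LinearMap.mulLeft k (qhGen k Q v (QHGen.vert i))).comp
      (LinearMap.mulRight k (qhGen k Q v (QHGen.vert j))))

/-- The matrix Hilbert series `h_{ᵛΛ}(t)` over `k[[t]]`. -/
noncomputable def qhHilb (k : Type) [Field k] (Q : FinQuiver) (v : Fin Q.r → k) :
    Matrix (Fin Q.r) (Fin Q.r) (PowerSeries k) :=
  Matrix.of fun i j => PowerSeries.mk fun n => (Module.finrank k (qhCorner k Q v n i j) : k)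

/-!
Let `A = ᵛΛ(Q)` and let `B = A / z A` be the preprojective algebra. An explicit left module over
`A` (`HeisenbergRep.Model`) shows that the start of the projective resolution of the simple
`A`-modules is exact; modulo `z` this gives the corresponding part of the resolution over `B`,
`B(-2) → ⨁ B(-1) → B`.

Over `B` only the injectivity of the first map is missing. Its kernel lies in the left socle of
`B`. A nonzero socle element of `e_i B_n` can be lifted along the resolution through the dual of
`B`, each arrow lowering the degree by one, so that all paths of length `n + 1` starting at `i`
vanish. By reversal of paths `B e_i` is then finite dimensional, and summing the recursion for its
dimensions over all degrees gives a superharmonic vector for the Tits form, so `Q` would be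
Dynkin.

Over `A`, induction on the degree shows that `z` is a nonzerodivisor: once it is injective in lower
degrees, the resolution bounds `dim A_n` below by `dim B_n + dim A_{n-2}`. Hence
`(1 - t²) h_A = h_B` and `(1 - C t + t²) h_B = 1`.
-/

open Module DirectSum FinQuiver

namespace FinQuiver

variable {Q : FinQuiver}

/-- The arrows of the double quiver: `inl α` stands for `α` and `inr α` for `α*`, so that
`Sum.swap` is the reversal of arrows. -/
abbrev DArrow (Q : FinQuiver) : Type := Q.Arrow ⊕ Q.Arrow

/-- Source of an arrow of the double quiver. -/
def dsrc : Q.DArrow → Fin Q.r := Sum.elim Q.src Q.tgt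

/-- Target of an arrow of the double quiver. -/
def dtgt : Q.DArrow → Fin Q.r := Sum.elim Q.tgt Q.src

/-- The sign with which `a a*` occurs in the mesh relation. -/
def dsign (R : Type*) [Ring R] : Q.DArrow → R := Sum.elim (fun _ ↦ 1) (fun _ ↦ -1)

/-- The arrows of the double quiver with source `i`. -/
abbrev Out (i : Fin Q.r) : Type := {a : Q.DArrow // dsrc a = i}

@[simp] lemma dsrc_swap (a : Q.DArrow) : dsrc a.swap = dtgt a := by cases a <;> rfl

@[simp] lemma dtgt_swap (a : Q.DArrow) : dtgt a.swap = dsrc a := by cases a <;> rfl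

lemma dsign_mul_self (R : Type*) [Ring R] (a : Q.DArrow) : dsign R a * dsign R a = 1 := by
  cases a <;> simp [dsign]

section Sums

variable {M : Type*} [AddCommMonoid M]

lemma sum_out_eq_sum_ite (i : Fin Q.r) (f : Q.DArrow → M) :
    ∑ a : Out i, f a.1 = ∑ a, if dsrc a = i then f a else 0 := by
  rw [← Finset.sum_filter]
  exact (Finset.sum_subtype _ (by simp) f).symm

lemma sum_out_eq_add (i : Fin Q.r) (f : Q.DArrow → M) :
    ∑ a : Out i, f a.1 = (∑ α, if Q.src α = i then f (Sum.inl α) else 0)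
      + ∑ α, if Q.tgt α = i then f (Sum.inr α) else 0 := by
  rw [sum_out_eq_sum_ite, Fintype.sum_sum_type]
  rfl

lemma sum_out_comm (f : Q.DArrow → M) :
    ∑ i, ∑ a : Out i, f a.1 = ∑ α, (f (Sum.inl α) + f (Sum.inr α)) := by
  simp_rw [sum_out_eq_sum_ite]
  rw [Finset.sum_comm]
  simp [Fintype.sum_sum_type, Finset.sum_add_distrib]

lemma sum_doubleAdj_smul {R : Type*} [Semiring R] [Module R M] (i : Fin Q.r) (f : Fin Q.r → M) :
    ∑ l, (Q.doubleAdj i l : R) • f l = ∑ a : Out i, f (dtgt a.1) := by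
  have expand (l) : (Q.doubleAdj i l : R) • f l
      = (∑ α, if Q.src α = i ∧ Q.tgt α = l then f l else 0)
        + ∑ α, if Q.tgt α = i ∧ Q.src α = l then f l else 0 := by
    simp only [doubleAdj, adjMatrix, Matrix.of_apply, Fintype.card_subtype, Nat.cast_add,
      Finset.sum_ite, Finset.sum_const, smul_zero, Nat.cast_smul_eq_nsmul, add_smul,
      add_zero, and_comm (a := Q.src _ = l)]
  rw [sum_out_eq_add i fun a ↦ f (dtgt a)]
  simp only [expand, Finset.sum_add_distrib]
  congr 1 <;> rw [Finset.sum_comm] <;> refine Finset.sum_congr rfl fun α _ ↦ ?_ <;>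
    simp [ite_and, dtgt]

end Sums

lemma Connected.forall_of_darrow (hconn : Q.Connected) {p : Fin Q.r → Prop}
    (hp : ∀ a : Q.DArrow, p (dsrc a) → p (dtgt a)) {j : Fin Q.r} (hj : p j) (i : Fin Q.r) :
    p i := by
  induction hconn j i with
  | refl => exact hj
  | tail _ hedge ih =>
    obtain ⟨α, ⟨rfl, rfl⟩ | ⟨rfl, rfl⟩⟩ := hedge
    · exact hp (Sum.inl α) ih
    · exact hp (Sum.inr α) ih

/-- The ground state representation of the Tits form. -/
lemma two_mul_titsForm_eq {w : Fin Q.r → ℝ} (hw : ∀ i, w i ≠ 0) (x : Fin Q.r → ℝ) :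
    2 * Q.titsForm x
      = ∑ α, w (Q.src α) * w (Q.tgt α) *
          (x (Q.src α) / w (Q.src α) - x (Q.tgt α) / w (Q.tgt α)) ^ 2
        + ∑ i, x i ^ 2 / w i * (2 * w i - ∑ a : Out i, w (dtgt a.1)) := by
  have edge (α : Q.Arrow) :
      w (Q.src α) * w (Q.tgt α) * (x (Q.src α) / w (Q.src α) - x (Q.tgt α) / w (Q.tgt α)) ^ 2
        = x (Q.src α) ^ 2 / w (Q.src α) * w (Q.tgt α) + x (Q.tgt α) ^ 2 / w (Q.tgt α) * w (Q.src α)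
          - 2 * (x (Q.src α) * x (Q.tgt α)) := by
    have := hw (Q.src α)
    have := hw (Q.tgt α)
    field_simp
    ring
  have edges : ∑ i, ∑ a : Out i, x i ^ 2 / w i * w (dtgt a.1)
      = ∑ α, (x (Q.src α) ^ 2 / w (Q.src α) * w (Q.tgt α)
          + x (Q.tgt α) ^ 2 / w (Q.tgt α) * w (Q.src α)) := by
    refine Eq.trans ?_ (sum_out_comm fun a ↦ x (dsrc a) ^ 2 / w (dsrc a) * w (dtgt a))
    exact Finset.sum_congr rfl fun i _ ↦ Finset.sum_congr rfl fun a _ ↦ by rw [a.2]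
  have diagonal (i) : x i ^ 2 / w i * (2 * w i) = 2 * x i ^ 2 := by
    have := hw i
    field_simp
  simp only [titsForm, edge, mul_sub, diagonal, Finset.sum_sub_distrib, Finset.mul_sum, edges]
  ring

lemma pos_of_superharmonic (hconn : Q.Connected) {w : Fin Q.r → ℝ} (hw : ∀ i, 0 ≤ w i)
    (hle : ∀ i, ∑ a : Out i, w (dtgt a.1) ≤ 2 * w i) {j : Fin Q.r} (hj : 0 < w j)
    (i : Fin Q.r) : 0 < w i := by
  refine hconn.forall_of_darrow (p := fun i ↦ 0 < w i) (fun a ha ↦ ?_) hj i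
  have reverse : w (dsrc a) ≤ ∑ b : Out (dtgt a), w (dtgt b.1) := by
    simpa using Finset.single_le_sum (f := fun b : Out (dtgt a) ↦ w (dtgt b.1))
      (fun b _ ↦ hw _) (Finset.mem_univ ⟨a.swap, dsrc_swap a⟩)
  linarith [hle (dtgt a)]

theorem isDynkin_of_superharmonic (hconn : Q.Connected) {w : Fin Q.r → ℝ} (hw : ∀ i, 0 ≤ w i)
    (hle : ∀ i, ∑ a : Out i, w (dtgt a.1) ≤ 2 * w i) {j : Fin Q.r}
    (hlt : ∑ a : Out j, w (dtgt a.1) < 2 * w j) : Q.IsDynkin := by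
  have hpos : ∀ i, 0 < w i := pos_of_superharmonic hconn hw hle (j := j) <| by
    linarith [Finset.sum_nonneg fun (a : Out j) (_ : a ∈ Finset.univ) ↦ hw (dtgt a.1)]
  have edge_nonneg (x : Fin Q.r → ℝ) (α : Q.Arrow) : 0 ≤ w (Q.src α) * w (Q.tgt α) *
      (x (Q.src α) / w (Q.src α) - x (Q.tgt α) / w (Q.tgt α)) ^ 2 :=
    mul_nonneg (mul_pos (hpos _) (hpos _)).le (sq_nonneg _)
  have vertex_nonneg (x : Fin Q.r → ℝ) (i) :
      0 ≤ x i ^ 2 / w i * (2 * w i - ∑ a : Out i, w (dtgt a.1)) :=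
    mul_nonneg (div_nonneg (sq_nonneg _) (hw i)) (sub_nonneg.2 (hle i))
  intro x hx
  by_contra! hq
  have hsum := two_mul_titsForm_eq (fun i ↦ (hpos i).ne') x
  have edge_sum := Finset.sum_nonneg fun α (_ : α ∈ Finset.univ) ↦ edge_nonneg x α
  have vertex_sum := Finset.sum_nonneg fun i (_ : i ∈ Finset.univ) ↦ vertex_nonneg x i
  obtain ⟨edge_sum_zero, vertex_sum_zero⟩ := (add_eq_zero_iff_of_nonneg edge_sum vertex_sum).1
    ((hsum.symm.trans_le (by linarith only [hq])).antisymm (add_nonneg edge_sum vertex_sum))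
  have edge_zero := (Finset.sum_eq_zero_iff_of_nonneg fun α _ ↦ edge_nonneg x α).1 edge_sum_zero
  have vertex_zero := (Finset.sum_eq_zero_iff_of_nonneg fun i _ ↦ vertex_nonneg x i).1
    vertex_sum_zero j (Finset.mem_univ j)
  have ratio_eq (α : Q.Arrow) : x (Q.src α) / w (Q.src α) = x (Q.tgt α) / w (Q.tgt α) := by
    simpa [(hpos _).ne', sub_eq_zero] using edge_zero α (Finset.mem_univ α)
  have ratio_zero : ∀ i, x i / w i = 0 := by
    refine hconn.forall_of_darrow (j := j) ?_ ?_
    · rintro (α | α) h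
      · exact (ratio_eq α).symm.trans h
      · exact (ratio_eq α).trans h
    · simpa [(hpos j).ne', (sub_pos.2 hlt).ne'] using vertex_zero
  exact hx (funext fun i ↦ by simpa [(hpos i).ne'] using ratio_zero i)

/-- Summing the recursion over all degrees yields a superharmonic vector. -/
theorem isDynkin_of_summable_recursion (hconn : Q.Connected) {d : ℤ → Fin Q.r → ℝ}
    (hd : ∀ n i, 0 ≤ d n i) (hsummable : ∀ i, Summable fun n ↦ d n i) {j : Fin Q.r}
    (hrec : ∀ n i, ∑ a : Out i, d (n - 1) (dtgt a.1) + (if n = 0 ∧ i = j then 1 else 0)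
      ≤ d n i + d (n - 2) i) : Q.IsDynkin := by
  let w : Fin Q.r → ℝ := fun i ↦ ∑' n, d n i
  have shift (c : ℤ) (i) : HasSum (fun n ↦ d (n - c) i) (w i) :=
    (Equiv.subRight c).hasSum_iff.2 (hsummable i).hasSum
  have hw (i) : ∑ a : Out i, w (dtgt a.1) + (if i = j then 1 else 0) ≤ 2 * w i := by
    rw [two_mul]
    refine hasSum_le (fun n ↦ hrec n i) (HasSum.add ?_ ?_)
      ((hsummable i).hasSum.add (shift 2 i))
    · exact hasSum_sum fun a _ ↦ shift 1 (dtgt a.1)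
    · simp only [ite_and]
      exact hasSum_ite_eq 0 _
  refine isDynkin_of_superharmonic hconn (fun i ↦ tsum_nonneg fun n ↦ hd n i) (w := w) (j := j)
    (fun i ↦ ?_) ?_
  · exact (le_add_of_nonneg_right (by split_ifs <;> simp)).trans (hw i)
  · exact (lt_add_one _).trans_le (by simpa using hw j)

end FinQuiver

section Finrank

variable {k V₀ V₁ V₂ V₃ : Type*} [Field k] [AddCommGroup V₀] [AddCommGroup V₁] [AddCommGroup V₂]
  [AddCommGroup V₃] [Module k V₀] [Module k V₁] [Module k V₂] [Module k V₃]
  [FiniteDimensional k V₁]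

lemma finrank_add_finrank_le_of_exact [FiniteDimensional k V₀] [FiniteDimensional k V₂]
    (d₁ : V₁ →ₗ[k] V₀) (d₂ : V₂ →ₗ[k] V₁) (d₃ : V₃ →ₗ[k] V₂)
    (hexact : LinearMap.ker d₁ ≤ LinearMap.range d₂) (hcomp : d₂ ∘ₗ d₃ = 0)
    (hinj : Function.Injective d₃) :
    finrank k V₁ + finrank k V₃ ≤ finrank k V₀ + finrank k V₂ := by
  have rank₁ := d₁.finrank_range_add_finrank_ker
  have rank₂ := d₂.finrank_range_add_finrank_ker
  have ker_le := Submodule.finrank_mono hexact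
  have range_le := (LinearMap.range d₁).finrank_le
  have le_ker := Submodule.finrank_mono (LinearMap.range_le_ker_iff.mpr hcomp)
  rw [LinearMap.finrank_range_of_inj hinj] at le_ker
  omega

lemma finrank_eq_add_of_shortExact (d₁ : V₁ →ₗ[k] V₀) (d₂ : V₂ →ₗ[k] V₁)
    (hsurj : Function.Surjective d₁) (hexact : LinearMap.ker d₁ = LinearMap.range d₂)
    (hinj : Function.Injective d₂) :
    finrank k V₁ = finrank k V₀ + finrank k V₂ := by
  rw [← d₁.finrank_range_add_finrank_ker, hexact, LinearMap.finrank_range_of_inj hinj,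
    LinearMap.range_eq_top.mpr hsurj, finrank_top]

end Finrank

section MonomialSpan

variable {k X ι A : Type*} [CommSemiring k] [AddMonoid ι] [Semiring A] [Algebra k A]

/-- The span of the monomials of weight `n` in a family `gen` of elements of weights `wt`. -/
def monomialSpan (k : Type*) [CommSemiring k] [Algebra k A] (wt : X → ι) (gen : X → A) (n : ι) :
    Submodule k A :=
  Submodule.span k {x | ∃ l : List X, (l.map wt).sum = n ∧ x = (l.map gen).prod}

variable {wt : X → ι} {gen : X → A}

lemma prod_mem_monomialSpan (l : List X) :
    (l.map gen).prod ∈ monomialSpan k wt gen (l.map wt).sum :=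
  Submodule.subset_span ⟨l, rfl, rfl⟩

lemma mem_monomialSpan (x : X) : gen x ∈ monomialSpan k wt gen (wt x) := by
  simpa using prod_mem_monomialSpan (k := k) (wt := wt) (gen := gen) [x]

instance monomialSpan.gradedMonoid : SetLike.GradedMonoid (monomialSpan k wt gen) where
  one_mem := prod_mem_monomialSpan []
  mul_mem m n a b ha hb := by
    have := Submodule.mul_mem_mul ha hb
    rw [monomialSpan, monomialSpan, Submodule.span_mul_span] at this
    refine Submodule.span_mono ?_ this
    rintro _ ⟨_, ⟨l, rfl, rfl⟩, _, ⟨l', rfl, rfl⟩, rfl⟩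
    exact ⟨l ++ l', by simp, by simp⟩

lemma map_monomialSpan {B : Type*} [Semiring B] [Algebra k B] (f : A →ₐ[k] B) (n : ι) :
    (monomialSpan k wt gen n).map f.toLinearMap = monomialSpan k wt (f ∘ gen) n := by
  rw [monomialSpan, monomialSpan, Submodule.map_span]
  congr 1
  ext x
  simp [eq_comm, map_list_prod]

end MonomialSpan

section HomogeneousPresentation

variable {k X ι : Type*} [CommRing k] [AddMonoid ι] (wt : X → ι)
  (r : FreeAlgebra k X → FreeAlgebra k X → Prop)

/-- The weight pieces of the algebra presented by the relations `r`. -/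
abbrev presentedPiece : ι → Submodule k (RingQuot r) :=
  monomialSpan k wt (RingQuot.mkAlgHom k r ∘ FreeAlgebra.ι k)

variable {r} in
lemma mkAlgHom_mem_presentedPiece {n : ι} {a : FreeAlgebra k X}
    (ha : a ∈ monomialSpan k wt (FreeAlgebra.ι k) n) :
    RingQuot.mkAlgHom k r a ∈ presentedPiece wt r n :=
  (map_monomialSpan (RingQuot.mkAlgHom k r) n).le ⟨a, ha, rfl⟩

variable [DecidableEq ι]

/-- Sends each generator to itself, in the summand of its weight. -/
noncomputable def freeDecompose : FreeAlgebra k X →ₐ[k] ⨁ n, presentedPiece wt r n :=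
  FreeAlgebra.lift k fun x ↦ of (fun n ↦ presentedPiece wt r n) (wt x) ⟨_, mem_monomialSpan x⟩

variable {wt r}

lemma freeDecompose_apply_of_mem {n : ι} {a : FreeAlgebra k X}
    (ha : a ∈ monomialSpan k wt (FreeAlgebra.ι k) n) :
    freeDecompose wt r a
      = of (fun n ↦ presentedPiece wt r n) n ⟨_, mkAlgHom_mem_presentedPiece wt ha⟩ := by
  have monomial (l : List X) : freeDecompose wt r (l.map (FreeAlgebra.ι k)).prod
      = of (fun n ↦ presentedPiece wt r n) (l.map wt).sum
        ⟨_, mkAlgHom_mem_presentedPiece wt (prod_mem_monomialSpan l)⟩ := by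
    induction l with
    | nil =>
      refine (map_one _).trans (of_eq_of_gradedMonoid_eq (Sigma.subtype_ext rfl ?_))
      exact (map_one (RingQuot.mkAlgHom k r)).symm
    | cons x l ih =>
      simp only [List.map_cons, List.prod_cons, map_mul, ih]
      rw [freeDecompose, FreeAlgebra.lift_ι_apply, of_mul_of]
      exact of_eq_of_gradedMonoid_eq (Sigma.subtype_ext rfl rfl)
  induction ha using Submodule.span_induction with
  | mem a ha =>
    obtain ⟨l, rfl, rfl⟩ := ha
    exact monomial l
  | zero => simp only [map_zero]; exact (map_zero (of _ n)).symm
  | add a b _ _ ha hb =>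
    rw [map_add, ha, hb, ← map_add]
    exact congrArg _ (Subtype.ext (map_add _ a b).symm)
  | smul c a _ ha =>
    rw [map_smul, ha, ← lof_eq_of k, ← map_smul]
    exact congrArg _ (Subtype.ext (map_smul _ c a).symm)

/-- An algebra presented by homogeneous relations is graded by weight. -/
@[reducible]
noncomputable def presentedGradedAlgebra
    (hr : ∀ a b, r a b → ∃ n, a ∈ monomialSpan k wt (FreeAlgebra.ι k) n
      ∧ b ∈ monomialSpan k wt (FreeAlgebra.ι k) n) :
    GradedAlgebra (presentedPiece wt r) :=
  .ofAlgHom _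
    (RingQuot.liftAlgHom k ⟨freeDecompose wt r, fun a b hab ↦ by
      obtain ⟨n, ha, hb⟩ := hr a b hab
      rw [freeDecompose_apply_of_mem ha, freeDecompose_apply_of_mem hb]
      congr 2
      exact RingQuot.mkAlgHom_rel k hab⟩)
    (by
      ext x
      simp [freeDecompose])
    (by
      rintro n ⟨x, hx⟩
      obtain ⟨a, ha, rfl⟩ : ∃ a ∈ monomialSpan k wt (FreeAlgebra.ι k) n,
          RingQuot.mkAlgHom k r a = x := by
        rwa [presentedPiece, ← map_monomialSpan] at hx
      rw [RingQuot.liftAlgHom_mkAlgHom_apply]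
      exact freeDecompose_apply_of_mem ha)

end HomogeneousPresentation

section QuotientGrading

variable {k ι A B : Type*} [CommRing k] [AddMonoid ι] [DecidableEq ι] [Ring A] [Algebra k A]
  [Ring B] [Algebra k B] (𝒜 : ι → Submodule k A) [GradedAlgebra 𝒜] {q : A →ₐ[k] B}

variable (q) in
/-- The homogeneous decomposition in `A`, carried to `B` componentwise. -/
noncomputable def mapDecompose : A →ₗ[k] ⨁ n, (𝒜 n).map q.toLinearMap :=
  lmap (fun n ↦ q.toLinearMap.submoduleMap (𝒜 n)) ∘ₗ (decomposeLinearEquiv 𝒜).toLinearMap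

lemma mapDecompose_apply (a : A) (n : ι) : (mapDecompose 𝒜 q a n : B) = q (decompose 𝒜 a n) := rfl

lemma mapDecompose_surjective : Function.Surjective (mapDecompose 𝒜 q) :=
  ((lmap_surjective _).2 fun n ↦ q.toLinearMap.submoduleMap_surjective (𝒜 n)).comp
    (decomposeLinearEquiv 𝒜).surjective

lemma coeLinearMap_mapDecompose (a : A) :
    coeLinearMap (fun n ↦ (𝒜 n).map q.toLinearMap) (mapDecompose 𝒜 q a) = q a := by
  induction a using Decomposition.inductionOn 𝒜 with
  | zero => simp
  | homogeneous a => simp [mapDecompose]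
  | add a b ha hb => simp [ha, hb]

lemma mapDecompose_eq_of_apply_eq (hker : (RingHom.ker q).IsHomogeneous 𝒜) {a b : A}
    (h : q a = q b) : mapDecompose 𝒜 q a = mapDecompose 𝒜 q b := by
  refine DFinsupp.ext fun n ↦ Subtype.ext (sub_eq_zero.1 ?_)
  have mem_ker : a - b ∈ RingHom.ker q := by rw [RingHom.mem_ker, map_sub, h, sub_self]
  simpa [mapDecompose_apply, decompose_sub, DirectSum.sub_apply] using hker n mem_ker

/-- A quotient of a graded algebra by a homogeneous ideal is graded. -/
@[reducible]
noncomputable def mapGradedAlgebra (hq : Function.Surjective q)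
    (hker : (RingHom.ker q).IsHomogeneous 𝒜) :
    GradedAlgebra fun n ↦ (𝒜 n).map q.toLinearMap where
  one_mem := ⟨1, SetLike.GradedOne.one_mem, map_one q⟩
  mul_mem := by
    rintro m n _ _ ⟨a, ha, rfl⟩ ⟨b, hb, rfl⟩
    exact ⟨a * b, SetLike.GradedMul.mul_mem ha hb, map_mul q a b⟩
  decompose' b := mapDecompose 𝒜 q (Function.surjInv hq b)
  left_inv b :=
    (coeLinearMap_mapDecompose 𝒜 _).trans (Function.surjInv_eq hq b)
  right_inv y := by
    obtain ⟨a, rfl⟩ := mapDecompose_surjective 𝒜 y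
    refine mapDecompose_eq_of_apply_eq 𝒜 hker ((Function.surjInv_eq hq _).trans ?_)
    exact coeLinearMap_mapDecompose 𝒜 a

end QuotientGrading

section GradedProj

variable {k ι B : Type*} [CommRing k] [AddCommGroup ι] [DecidableEq ι] [Ring B] [Algebra k B]
  {ℬ : ι → Submodule k B} [GradedAlgebra ℬ]

lemma proj_mul_of_left_mem {m : ι} {b : B} (hb : b ∈ ℬ m) (n : ι) (x : B) :
    GradedAlgebra.proj ℬ n (b * x) = b * GradedAlgebra.proj ℬ (n - m) x := by
  have := coe_decompose_mul_add_of_left_mem ℬ (j := n - m) (b := x) hb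
  rwa [add_sub_cancel] at this

lemma proj_mem (n : ι) (x : B) : GradedAlgebra.proj ℬ n x ∈ ℬ n := SetLike.coe_mem _

lemma proj_of_mem {n : ι} {x : B} (hx : x ∈ ℬ n) : GradedAlgebra.proj ℬ n x = x :=
  decompose_of_mem_same ℬ hx

lemma proj_of_mem_ne {m n : ι} {x : B} (hx : x ∈ ℬ m) (h : m ≠ n) :
    GradedAlgebra.proj ℬ n x = 0 :=
  decompose_of_mem_ne ℬ hx h

end GradedProj

/-- Images in a ring `B` of the trivial paths and of the arrows of the double quiver. -/
structure ArrowSystem (Q : FinQuiver) (B : Type*) [Ring B] where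
  e : Fin Q.r → B
  ar : Q.DArrow → B
  idem : CompleteOrthogonalIdempotents e
  e_mul_ar (a : Q.DArrow) : e (dsrc a) * ar a = ar a
  ar_mul_e (a : Q.DArrow) : ar a * e (dtgt a) = ar a

namespace ArrowSystem

variable {Q : FinQuiver} {B : Type*} [Ring B] (S : ArrowSystem Q B)

lemma e_mul_e (i j : Fin Q.r) : S.e i * S.e j = if i = j then S.e i else 0 := by
  simpa using S.idem.mul_eq i j

lemma e_mul_e_self (i : Fin Q.r) : S.e i * S.e i = S.e i := S.idem.idem i

lemma sum_e : ∑ i, S.e i = 1 := S.idem.complete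

lemma e_mul_ar_eq (i : Fin Q.r) (a : Q.DArrow) :
    S.e i * S.ar a = if dsrc a = i then S.ar a else 0 := by
  rw [← S.e_mul_ar, ← mul_assoc, e_mul_e]
  split_ifs with h h' <;> simp_all

lemma ar_mul_e_eq (a : Q.DArrow) (i : Fin Q.r) :
    S.ar a * S.e i = if dtgt a = i then S.ar a else 0 := by
  conv_lhs => rw [← S.ar_mul_e, mul_assoc, e_mul_e]
  split_ifs <;> simp [S.ar_mul_e]

lemma e_mul_sum_e_mul (i : Fin Q.r) (f : Fin Q.r → B) :
    S.e i * ∑ l, S.e l * f l = S.e i * f i := by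
  simp [Finset.mul_sum, ← mul_assoc, e_mul_e, ite_mul]

lemma ar_mul_sum_e_mul (a : Q.DArrow) (f : Fin Q.r → B) :
    S.ar a * ∑ l, S.e l * f l = S.ar a * f (dtgt a) := by
  rw [← S.ar_mul_e, mul_assoc, e_mul_sum_e_mul, mul_assoc]

lemma e_mul_sum_ar_mul (i : Fin Q.r) (y : Q.DArrow → B) :
    S.e i * ∑ a, S.ar a * y a = ∑ a : Out i, S.ar a.1 * y a.1 := by
  rw [sum_out_eq_sum_ite i fun a ↦ S.ar a * y a, Finset.mul_sum]
  simp only [← mul_assoc, e_mul_ar_eq, ite_mul, zero_mul]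

lemma sum_ar_mul_extend {i : Fin Q.r} (y : Out i → B) :
    ∑ a, S.ar a * Function.extend Subtype.val y 0 a = ∑ a : Out i, S.ar a.1 * y a := by
  refine (Fintype.sum_of_injective _ Subtype.val_injective _ _ (fun a ha ↦ ?_) fun a ↦ ?_).symm
  · rw [Function.extend_apply' _ _ _ ha, Pi.zero_apply, mul_zero]
  · rw [Subtype.val_injective.extend_apply]

lemma e_mul_extend {i : Fin Q.r} {y : Out i → B} (hy : ∀ a, S.e (dtgt a.1) * y a = y a)
    (a : Q.DArrow) :
    S.e (dtgt a) * Function.extend Subtype.val y 0 a = Function.extend Subtype.val y 0 a := by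
  by_cases ha : a ∈ Set.range (Subtype.val : Out i → Q.DArrow)
  · obtain ⟨a, rfl⟩ := ha
    rw [Subtype.val_injective.extend_apply, hy]
  · rw [Function.extend_apply' _ _ _ ha, Pi.zero_apply, mul_zero]

/-- The path composed of the arrows of `w`, as an element of `B`. -/
def word (w : List Q.DArrow) : B := (w.map S.ar).prod

@[simp] lemma word_nil : S.word [] = 1 := rfl

@[simp] lemma word_cons (a : Q.DArrow) (w : List Q.DArrow) :
    S.word (a :: w) = S.ar a * S.word w := List.prod_cons

lemma word_append (w w' : List Q.DArrow) : S.word (w ++ w') = S.word w * S.word w' := by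
  simp [word]

variable {k : Type*} [Field k] [Algebra k B] (ℬ : ℤ → Submodule k B)

/-- The subspace `e_i B_n e_j`. -/
def corner (n : ℤ) (i j : Fin Q.r) : Submodule k B :=
  (ℬ n).map (LinearMap.mulLeft k (S.e i) ∘ₗ LinearMap.mulRight k (S.e j))

/-- The grading `ℬ` is nonnegative, with trivial paths in degree `0` and arrows in degree `1`. -/
class IsGraded : Prop where
  e_mem (i : Fin Q.r) : S.e i ∈ ℬ 0
  ar_mem (a : Q.DArrow) : S.ar a ∈ ℬ 1
  eq_bot {n : ℤ} (hn : n < 0) : ℬ n = ⊥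

variable {S ℬ} in
lemma corner_eq_bot_of_neg [S.IsGraded ℬ] {n : ℤ} (hn : n < 0) (i j : Fin Q.r) :
    S.corner ℬ n i j = ⊥ := by
  rw [corner, IsGraded.eq_bot S (ℬ := ℬ) hn, Submodule.map_bot]

variable [GradedAlgebra ℬ]

/-- The projection `x ↦ e_i x_n e_j` onto `e_i B_n e_j`. -/
noncomputable def cornerProj (n : ℤ) (i j : Fin Q.r) : B →ₗ[k] S.corner ℬ n i j :=
  LinearMap.codRestrict _
    ((LinearMap.mulLeft k (S.e i) ∘ₗ LinearMap.mulRight k (S.e j)) ∘ₗ GradedAlgebra.proj ℬ n)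
    fun x ↦ ⟨_, proj_mem n x, rfl⟩

variable {S ℬ}

lemma coe_cornerProj (n : ℤ) (i j : Fin Q.r) (x : B) :
    (S.cornerProj ℬ n i j x : B) = S.e i * (GradedAlgebra.proj ℬ n x * S.e j) := rfl

variable [S.IsGraded ℬ]

lemma mem_corner_iff {n : ℤ} {i j : Fin Q.r} {x : B} :
    x ∈ S.corner ℬ n i j ↔ x ∈ ℬ n ∧ S.e i * x = x ∧ x * S.e j = x := by
  constructor
  · rintro ⟨y, hy, rfl⟩
    refine ⟨?_, ?_, ?_⟩
    · simpa using SetLike.mul_mem_graded (IsGraded.e_mem (ℬ := ℬ) i)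
        (SetLike.mul_mem_graded hy (IsGraded.e_mem (S := S) j))
    · simp [← mul_assoc, e_mul_e_self]
    · simp [mul_assoc, e_mul_e_self]
  · rintro ⟨hx, hix, hxj⟩
    exact ⟨x, hx, by simp [hxj, hix]⟩

lemma cornerProj_coe {n : ℤ} {i j : Fin Q.r} (x : S.corner ℬ n i j) :
    S.cornerProj ℬ n i j x = x := by
  obtain ⟨hx, hix, hxj⟩ := mem_corner_iff.1 x.2
  exact Subtype.ext (by rw [coe_cornerProj, proj_of_mem hx, hxj, hix])

lemma ar_mul_mem_corner {n : ℤ} {i j : Fin Q.r} (a : Out i) {x : B}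
    (hx : x ∈ S.corner ℬ (n - 1) (dtgt a.1) j) : S.ar a.1 * x ∈ S.corner ℬ n i j := by
  obtain ⟨a, rfl⟩ := a
  obtain ⟨hx, -, hxj⟩ := mem_corner_iff.1 hx
  refine mem_corner_iff.2 ⟨?_, by rw [← mul_assoc, S.e_mul_ar], by rw [mul_assoc, hxj]⟩
  simpa using SetLike.mul_mem_graded (IsGraded.ar_mem (S := S) a) hx

lemma ar_swap_mul_mem_corner {n : ℤ} {i j : Fin Q.r} (a : Out i) {x : B}
    (hx : x ∈ S.corner ℬ (n - 2) i j) :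
    S.ar a.1.swap * x ∈ S.corner ℬ (n - 1) (dtgt a.1) j := by
  refine ar_mul_mem_corner ⟨a.1.swap, dsrc_swap a.1⟩ ?_
  rwa [dtgt_swap, a.2, sub_sub, one_add_one_eq_two]

variable (S ℬ) in
/-- Left multiplication by the arrows with source `i`. -/
def arrowMap (n : ℤ) (i j : Fin Q.r) :
    ((a : Out i) → S.corner ℬ (n - 1) (dtgt a.1) j) →ₗ[k] S.corner ℬ n i j :=
  ∑ a : Out i, ((LinearMap.mulLeft k (S.ar a.1)).restrict fun x hx ↦ by
    exact ar_mul_mem_corner a hx) ∘ₗ LinearMap.proj a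

lemma coe_arrowMap (n : ℤ) (i j : Fin Q.r)
    (y : (a : Out i) → S.corner ℬ (n - 1) (dtgt a.1) j) :
    (S.arrowMap ℬ n i j y : B) = ∑ a, S.ar a.1 * y a := by
  rw [arrowMap, LinearMap.sum_apply, AddSubmonoidClass.coe_finsetSum]
  rfl

variable (S ℬ) in
/-- The map `p ↦ (± a* p)`, where `a` runs over the arrows with source `i`. -/
def meshMap (n : ℤ) (i j : Fin Q.r) :
    S.corner ℬ (n - 2) i j →ₗ[k] (a : Out i) → S.corner ℬ (n - 1) (dtgt a.1) j :=
  LinearMap.pi fun a ↦ dsign k a.1 •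
    (LinearMap.mulLeft k (S.ar a.1.swap)).restrict fun _ ↦ ar_swap_mul_mem_corner a

lemma coe_meshMap (n : ℤ) (i j : Fin Q.r) (p : S.corner ℬ (n - 2) i j) (a : Out i) :
    (S.meshMap ℬ n i j p a : B) = dsign k a.1 • (S.ar a.1.swap * p) := rfl

variable (S) in
lemma proj_ar_mul (n : ℤ) (a : Q.DArrow) (x : B) :
    GradedAlgebra.proj ℬ n (S.ar a * x) = S.ar a * GradedAlgebra.proj ℬ (n - 1) x :=
  proj_mul_of_left_mem (IsGraded.ar_mem a) n x

lemma cornerProj_sum_ar_mul (n : ℤ) (i j : Fin Q.r) (y : Q.DArrow → B) :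
    S.cornerProj ℬ n i j (∑ a, S.ar a * y a)
      = S.arrowMap ℬ n i j fun a ↦ S.cornerProj ℬ (n - 1) (dtgt a.1) j (y a.1) := by
  apply Subtype.ext
  rw [coe_cornerProj, coe_arrowMap, map_sum, Finset.sum_mul]
  simp only [proj_ar_mul, mul_assoc, coe_cornerProj]
  rw [e_mul_sum_ar_mul]
  simp only [← mul_assoc, S.ar_mul_e]

lemma meshMap_cornerProj (n : ℤ) (i j : Fin Q.r) (p : B) (a : Out i) :
    S.meshMap ℬ n i j (S.cornerProj ℬ (n - 2) i j p) a
      = S.cornerProj ℬ (n - 1) (dtgt a.1) j (dsign k a.1 • (S.ar a.1.swap * p)) := by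
  have ar_mul_e : S.ar a.1.swap * S.e i = S.ar a.1.swap := by
    simpa only [dtgt_swap, a.2] using S.ar_mul_e a.1.swap
  have e_mul_ar : S.e (dtgt a.1) * S.ar a.1.swap = S.ar a.1.swap := by
    simpa only [dsrc_swap] using S.e_mul_ar a.1.swap
  apply Subtype.ext
  rw [map_smul, coe_meshMap, Submodule.coe_smul, coe_cornerProj, coe_cornerProj, proj_ar_mul,
    sub_sub, one_add_one_eq_two, ← mul_assoc, ar_mul_e, mul_assoc, ← mul_assoc (S.e _), e_mul_ar]

lemma cornerProj_sum_smul_e (n : ℤ) (i j : Fin Q.r) (c : Fin Q.r → k) :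
    (S.cornerProj ℬ n i j (∑ l, c l • S.e l) : B)
      = if n = 0 ∧ i = j then c i • S.e i else 0 := by
  have mem : ∑ l, c l • S.e l ∈ ℬ 0 :=
    Submodule.sum_mem _ fun l _ ↦ Submodule.smul_mem _ _ (IsGraded.e_mem l)
  rw [coe_cornerProj]
  by_cases hn : n = 0
  · subst hn
    rw [proj_of_mem mem]
    simp only [Finset.sum_mul, smul_mul_assoc, e_mul_e, smul_ite, smul_zero,
      Finset.sum_ite_eq', Finset.mem_univ, if_true, mul_smul_comm, true_and]
    split_ifs with hij
    · rw [hij]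
    · rfl
  · rw [proj_of_mem_ne mem (Ne.symm hn)]
    simp [hn]

end ArrowSystem

namespace ArrowSystem

variable {Q : FinQuiver} {B : Type*} [Ring B] {k : Type*} [Field k] [Algebra k B]

/-- The left `B`-module structure of the dual of `B`: `b` sends `f` to `x ↦ f (x * b)`. -/
def dualRep (k B : Type*) [Field k] [Ring B] [Algebra k B] : B →ₐ[k] End k (Dual k B) :=
  AlgHom.ofLinearMap (Dual.transpose ∘ₗ (LinearMap.mul k B).flip)
    (by ext f x; exact congrArg f (mul_one x))
    (fun b c ↦ by ext f x; exact congrArg f (mul_assoc x b c).symm)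

@[simp] lemma dualRep_apply (b : B) (f : Dual k B) (x : B) : dualRep k B b f x = f (x * b) := rfl

lemma dualRep_mul (b c : B) (f : Dual k B) :
    dualRep k B (b * c) f = dualRep k B b (dualRep k B c f) := by
  rw [map_mul, End.mul_apply]

variable (S : ArrowSystem Q B) (ℬ : ℤ → Submodule k B)

/-- The properties of the preprojective algebra from which its Hilbert series is computed. The
field `exact` says that the projective resolution of the simple modules is exact up to its
second term, and `reverse` that the reversal of paths is compatible with the relations. -/
structure IsPreprojective : Prop where
  finite (n : ℤ) (i j : Fin Q.r) : FiniteDimensional k (S.corner ℬ n i j)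
  mesh : ∑ a, dsign k a • (S.ar a * S.ar a.swap) = 0
  generates (x : B) : ∃ (c : Fin Q.r → k) (y : Q.DArrow → B),
    x = ∑ l, c l • S.e l + ∑ a, S.ar a * y a
  exact (c : Fin Q.r → k) (y : Q.DArrow → B) : (∀ a, S.e (dtgt a) * y a = y a) →
    ∑ l, c l • S.e l + ∑ a, S.ar a * y a = 0 →
      c = 0 ∧ ∃ p, ∀ a, y a = dsign k a • (S.ar a.swap * p)
  reverse (w : List Q.DArrow) (i : Fin Q.r) :
    S.e i * S.word w = 0 → S.word (w.map Sum.swap).reverse * S.e i = 0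

namespace IsPreprojective

variable {S ℬ} (hS : S.IsPreprojective ℬ)
include hS

lemma e_ne_zero (i : Fin Q.r) : S.e i ≠ 0 := by
  intro h
  have := (hS.exact (Pi.single i 1) 0 (by simp) (by simp [Pi.single_apply, h])).1
  exact one_ne_zero (α := k) (by simpa using congrFun this i)

variable [GradedAlgebra ℬ] [S.IsGraded ℬ]

lemma exists_eq_add_arrowMap {n : ℤ} {i j : Fin Q.r} (x : S.corner ℬ n i j) :
    ∃ (c : k) (y : (a : Out i) → S.corner ℬ (n - 1) (dtgt a.1) j),
      (x : B) = (if n = 0 ∧ i = j then c • S.e i else 0) + S.arrowMap ℬ n i j y := by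
  obtain ⟨c, y, h⟩ := hS.generates x
  refine ⟨c i, fun a ↦ S.cornerProj ℬ (n - 1) (dtgt a.1) j (y a.1), ?_⟩
  rw [← cornerProj_sum_smul_e (ℬ := ℬ), ← cornerProj_sum_ar_mul n i j y, ← Submodule.coe_add,
    ← map_add, ← h, cornerProj_coe]

lemma arrowMap_surjective {n : ℤ} (hn : n ≠ 0) (i j : Fin Q.r) :
    Function.Surjective (S.arrowMap ℬ n i j) := by
  intro x
  obtain ⟨c, y, h⟩ := hS.exists_eq_add_arrowMap x
  exact ⟨y, Subtype.ext (by simpa [hn] using h.symm)⟩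

lemma corner_zero (i j : Fin Q.r) :
    S.corner ℬ 0 i j = if i = j then Submodule.span k {S.e i} else ⊥ := by
  have decomp {x : B} (hx : x ∈ S.corner ℬ 0 i j) :
      ∃ c : k, x = if i = j then c • S.e i else 0 := by
    obtain ⟨c, y, h⟩ := hS.exists_eq_add_arrowMap ⟨x, hx⟩
    have hy : y = 0 := funext fun a ↦ Subtype.ext <| (Submodule.mem_bot k).1 <|
      (corner_eq_bot_of_neg (by norm_num) _ _).le (y a).2
    exact ⟨c, by simpa [hy] using h⟩
  refine le_antisymm (fun x hx ↦ ?_) ?_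
  · obtain ⟨c, rfl⟩ := decomp hx
    split_ifs
    · exact Submodule.smul_mem _ c (Submodule.mem_span_singleton_self _)
    · exact Submodule.zero_mem _
  · split_ifs with hij
    · rw [Submodule.span_singleton_le_iff_mem, ← hij]
      exact mem_corner_iff.2 ⟨IsGraded.e_mem i, S.e_mul_e_self i, S.e_mul_e_self i⟩
    · exact bot_le

lemma finrank_corner_zero (i j : Fin Q.r) :
    finrank k (S.corner ℬ 0 i j) = if i = j then 1 else 0 := by
  rcases eq_or_ne i j with rfl | hij
  · rw [hS.corner_zero, if_pos rfl, if_pos rfl, finrank_span_singleton (hS.e_ne_zero i)]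
  · rw [hS.corner_zero, if_neg hij, if_neg hij, finrank_bot]

lemma arrowMap_comp_meshMap (n : ℤ) (i j : Fin Q.r) :
    S.arrowMap ℬ n i j ∘ₗ S.meshMap ℬ n i j = 0 := by
  have mesh : ∑ a : Out i, dsign k a.1 • (S.ar a.1 * S.ar a.1.swap) = 0 := by
    have := S.e_mul_sum_ar_mul i fun a ↦ dsign k a • S.ar a.swap
    simpa only [mul_smul_comm, hS.mesh, mul_zero] using this.symm
  ext p
  calc (S.arrowMap ℬ n i j (S.meshMap ℬ n i j p) : B)
      = (∑ a : Out i, dsign k a.1 • (S.ar a.1 * S.ar a.1.swap)) * p := by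
        simp only [coe_arrowMap, coe_meshMap, Finset.sum_mul, smul_mul_assoc, mul_smul_comm,
          mul_assoc]
    _ = 0 := by rw [mesh, zero_mul]

lemma ker_arrowMap_le (n : ℤ) (i j : Fin Q.r) :
    LinearMap.ker (S.arrowMap ℬ n i j) ≤ LinearMap.range (S.meshMap ℬ n i j) := by
  intro y hy
  have hy_sum : ∑ a : Out i, S.ar a.1 * y a = 0 := by
    rw [← coe_arrowMap, LinearMap.mem_ker.1 hy, ZeroMemClass.coe_zero]
  have hy_e (a : Out i) : S.e (dtgt a.1) * y a = y a := (mem_corner_iff.1 (y a).2).2.1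
  obtain ⟨-, p, hp⟩ := hS.exact 0 (Function.extend Subtype.val (fun a ↦ (y a : B)) 0)
    (S.e_mul_extend hy_e)
    (by simpa only [Pi.zero_apply, zero_smul, Finset.sum_const_zero, zero_add,
      S.sum_ar_mul_extend] using hy_sum)
  refine ⟨S.cornerProj ℬ (n - 2) i j p, funext fun a ↦ ?_⟩
  rw [meshMap_cornerProj, ← hp, Subtype.val_injective.extend_apply, cornerProj_coe]

lemma sum_finrank_le (n : ℤ) (i j : Fin Q.r) :
    ∑ a : Out i, finrank k (S.corner ℬ (n - 1) (dtgt a.1) j) + (if n = 0 ∧ i = j then 1 else 0)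
      ≤ finrank k (S.corner ℬ n i j) + finrank k (S.corner ℬ (n - 2) i j) := by
  have := hS.finite
  rcases eq_or_ne n 0 with rfl | hn
  · have h (l : Fin Q.r) : finrank k (S.corner ℬ (0 - 1) l j) = 0 := by
      rw [corner_eq_bot_of_neg (by norm_num), finrank_bot]
    simp only [h, Finset.sum_const_zero, zero_add, hS.finrank_corner_zero, true_and]
    exact Nat.le_add_right _ _
  · have h := finrank_add_finrank_le_of_exact (V₃ := (⊥ : Submodule k k)) (S.arrowMap ℬ n i j)
      (S.meshMap ℬ n i j) 0 (hS.ker_arrowMap_le n i j) (by simp)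
      (fun x y _ ↦ Subsingleton.elim x y)
    rw [finrank_bot, finrank_pi_fintype, add_zero] at h
    simpa [hn] using h

end IsPreprojective

section Socle

/-- `ψ` is homogeneous of degree `d`, compatible with trivial paths, and `(φ, ψ)` is compatible
with left multiplication by arrows. Iterating this relation, the socle element that starts the
sequence is reached from `ψ` by paths. -/
structure IsLift (φ ψ : Dual k B →ₗ[k] B) (d : ℤ) : Prop where
  e_mul (l : Fin Q.r) (f : Dual k B) : S.e l * ψ f = ψ (dualRep k B (S.e l) f)
  ar_mul (a : Q.DArrow) (f : Dual k B) : S.ar a * ψ f = φ (dualRep k B (S.ar a) f)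
  mem (f : Dual k B) : ψ f ∈ ℬ d

variable {S ℬ}

lemma isLift_of_socle [GradedAlgebra ℬ] [S.IsGraded ℬ] {n : ℤ} {i j : Fin Q.r} {x : B}
    (hx : x ∈ S.corner ℬ n i j) (hsoc : ∀ a, S.ar a * x = 0) :
    S.IsLift ℬ 0 (LinearMap.toSpanSingleton k B x ∘ₗ Dual.eval k B (S.e i)) n := by
  obtain ⟨hxn, hix, -⟩ := mem_corner_iff.1 hx
  refine ⟨fun l f ↦ ?_, fun a f ↦ ?_, fun f ↦ Submodule.smul_mem _ _ hxn⟩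
  · simp only [LinearMap.comp_apply, LinearMap.toSpanSingleton_apply, Dual.eval_apply,
      dualRep_apply, mul_smul_comm, e_mul_e]
    split_ifs with h
    · rw [← h, hix]
    · rw [← hix, ← mul_assoc, e_mul_e, if_neg (Ne.symm h), zero_mul, smul_zero, map_zero,
        zero_smul]
  · simp [hsoc]

variable (hS : S.IsPreprojective ℬ) {φ ψ : Dual k B →ₗ[k] B} {d : ℤ}
include hS

lemma IsPreprojective.exists_forall_ar_mul_eq (h : S.IsLift ℬ φ ψ d) (f : Dual k B) :
    ∃ p, ∀ a, S.ar a * p = ψ (dualRep k B (S.ar a) f) := by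
  let y (a : Q.DArrow) : B := dsign k a • ψ (dualRep k B (S.ar a.swap) f)
  have hy_e (a : Q.DArrow) : S.e (dtgt a) * y a = y a := by
    rw [mul_smul_comm, h.e_mul, ← dualRep_mul, ← dsrc_swap, S.e_mul_ar]
  have hy_sum : ∑ a, S.ar a * y a = 0 := by
    calc ∑ a, S.ar a * y a
        = φ (dualRep k B (∑ a, dsign k a • (S.ar a * S.ar a.swap)) f) := by
          simp only [y, map_sum, map_smul, LinearMap.sum_apply, LinearMap.smul_apply,
            dualRep_mul, mul_smul_comm, h.ar_mul]
      _ = 0 := by rw [hS.mesh, map_zero, LinearMap.zero_apply, map_zero]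
  obtain ⟨-, p, hp⟩ := hS.exact 0 y hy_e (by simpa using hy_sum)
  refine ⟨p, fun a ↦ ?_⟩
  have := congrArg (dsign k a.swap • ·) (hp a.swap)
  simpa only [y, smul_smul, dsign_mul_self, one_smul, Sum.swap_swap] using this.symm

lemma IsPreprojective.exists_linearMap_ar_mul_eq (h : S.IsLift ℬ φ ψ d) :
    ∃ χ : Dual k B →ₗ[k] B, ∀ a f, S.ar a * χ f = ψ (dualRep k B (S.ar a) f) := by
  let D : B →ₗ[k] (Q.DArrow → B) := LinearMap.pi fun a ↦ LinearMap.mulLeft k (S.ar a)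
  let E : Dual k B →ₗ[k] (Q.DArrow → B) := LinearMap.pi fun a ↦ ψ ∘ₗ dualRep k B (S.ar a)
  have hE (f : Dual k B) : E f ∈ LinearMap.range D := by
    obtain ⟨p, hp⟩ := hS.exists_forall_ar_mul_eq h f
    exact ⟨p, funext hp⟩
  obtain ⟨χ, hχ⟩ := projective_lifting_property D.rangeRestrict
    (LinearMap.codRestrict _ E hE) D.surjective_rangeRestrict
  exact ⟨χ, fun a f ↦ congrFun (congrArg Subtype.val (LinearMap.congr_fun hχ f)) a⟩

variable [GradedAlgebra ℬ] [S.IsGraded ℬ]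

lemma IsPreprojective.exists_isLift (h : S.IsLift ℬ φ ψ d) :
    ∃ χ : Dual k B →ₗ[k] B, S.IsLift ℬ ψ χ (d - 1) := by
  obtain ⟨χ, hχ⟩ := hS.exists_linearMap_ar_mul_eq h
  let χ' : Dual k B →ₗ[k] B := ∑ l, LinearMap.mulLeft k (S.e l) ∘ₗ
    GradedAlgebra.proj ℬ (d - 1) ∘ₗ χ ∘ₗ dualRep k B (S.e l)
  have hχ' (f : Dual k B) :
      χ' f = ∑ l, S.e l * GradedAlgebra.proj ℬ (d - 1) (χ (dualRep k B (S.e l) f)) :=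
    LinearMap.sum_apply _ _ _
  refine ⟨χ', fun l f ↦ ?_, fun a f ↦ ?_, fun f ↦ ?_⟩
  · rw [hχ', S.e_mul_sum_e_mul, hχ', Finset.sum_eq_single l, ← dualRep_mul, S.e_mul_e_self]
    · intro m _ hm
      simp [← dualRep_mul, S.e_mul_e, hm]
    · simp
  · rw [hχ', S.ar_mul_sum_e_mul, ← proj_ar_mul, hχ, ← dualRep_mul, S.ar_mul_e,
      proj_of_mem (h.mem _)]
  · rw [hχ']
    refine Submodule.sum_mem _ fun l _ ↦ ?_
    simpa using SetLike.mul_mem_graded (IsGraded.e_mem (S := S) l) (proj_mem (ℬ := ℬ) (d - 1) _)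

lemma IsPreprojective.exists_isLift_word {n : ℤ} {i j : Fin Q.r} {x : B}
    (hx : x ∈ S.corner ℬ n i j) (hsoc : ∀ a, S.ar a * x = 0) (m : ℕ) :
    ∃ φ ψ : Dual k B →ₗ[k] B, S.IsLift ℬ φ ψ (n - m) ∧
      ∀ w : List Q.DArrow, w.length = m → ∀ f, S.word w * ψ f = f (S.e i * S.word w) • x := by
  induction m with
  | zero =>
    refine ⟨_, _, by simpa using isLift_of_socle hx hsoc, fun w hw f ↦ ?_⟩
    rw [List.length_eq_zero_iff.1 hw]
    simp
  | succ m ih =>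
    obtain ⟨φ, ψ, hψ, hword⟩ := ih
    obtain ⟨χ, hχ⟩ := hS.exists_isLift hψ
    refine ⟨ψ, χ, by simpa [sub_sub] using hχ, fun w hw f ↦ ?_⟩
    obtain rfl | ⟨w, a, rfl⟩ := List.eq_nil_or_concat w
    · simp at hw
    · rw [List.concat_eq_append, word_append, mul_assoc, word_cons, word_nil, mul_one, hχ.ar_mul,
        hword w (by simpa using hw), dualRep_apply, mul_assoc]

/-- Lifting a socle element of degree `n` along `n + 1` arrows would lead to negative degree. -/
theorem IsPreprojective.e_mul_word_eq_zero {n : ℕ} {i j : Fin Q.r} {x : B}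
    (hx : x ∈ S.corner ℬ n i j) (hx0 : x ≠ 0) (hsoc : ∀ a, S.ar a * x = 0) {w : List Q.DArrow}
    (hw : w.length = n + 1) : S.e i * S.word w = 0 := by
  obtain ⟨φ, ψ, hψ, hword⟩ := hS.exists_isLift_word hx hsoc (n + 1)
  have hψ0 (f) : ψ f = 0 := by
    have := hψ.mem f
    rwa [IsGraded.eq_bot S (ℬ := ℬ) (n := n - (n + 1 : ℕ)) (by omega), Submodule.mem_bot] at this
  refine (forall_dual_apply_eq_zero_iff k _).1 fun f ↦ ?_
  refine (smul_eq_zero.1 ?_).resolve_right hx0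
  rw [← hword w hw f, hψ0, mul_zero]

end Socle

namespace IsPreprojective

variable {S ℬ} [GradedAlgebra ℬ] [S.IsGraded ℬ] (hS : S.IsPreprojective ℬ)
include hS

lemma corner_le_span (n : ℕ) (i j : Fin Q.r) :
    S.corner ℬ n i j
      ≤ Submodule.span k {x | ∃ w : List Q.DArrow, w.length = n ∧ x = S.word w * S.e j} := by
  induction n generalizing i with
  | zero =>
    rw [Nat.cast_zero, hS.corner_zero]
    split_ifs with hij
    · exact Submodule.span_mono (Set.singleton_subset_iff.2 ⟨[], rfl, by simp [hij]⟩)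
    · exact bot_le
  | succ n ih =>
    intro x hx
    obtain ⟨y, hy⟩ := hS.arrowMap_surjective (n := (n + 1 : ℕ)) (by omega) i j ⟨x, hx⟩
    rw [← show (S.arrowMap ℬ _ i j y : B) = x from congrArg Subtype.val hy, coe_arrowMap]
    refine Submodule.sum_mem _ fun a _ ↦ ?_
    have hya : (y a : B) ∈ S.corner ℬ n (dtgt a.1) j := by
      simpa using (y a).2
    have := Submodule.mem_map_of_mem (f := LinearMap.mulLeft k (S.ar a.1)) (ih _ hya)
    rw [Submodule.map_span] at this
    refine Submodule.span_mono ?_ this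
    rintro _ ⟨_, ⟨w, hw, rfl⟩, rfl⟩
    exact ⟨a.1 :: w, by simp [hw], by simp [mul_assoc]⟩

lemma corner_eq_bot {n : ℕ} {i : Fin Q.r}
    (h : ∀ w : List Q.DArrow, w.length = n + 1 → S.e i * S.word w = 0) {m : ℕ} (hm : n < m)
    (l : Fin Q.r) : S.corner ℬ m l i = ⊥ := by
  have reversed (w : List Q.DArrow) (hw : w.length = n + 1) : S.word w * S.e i = 0 := by
    simpa [Function.comp_def] using
      hS.reverse _ i (h (w.map Sum.swap).reverse (by simpa using hw))
  rw [eq_bot_iff]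
  refine (hS.corner_le_span m l i).trans (Submodule.span_le.2 ?_)
  rintro _ ⟨w, hw, rfl⟩
  rw [SetLike.mem_coe, Submodule.mem_bot, ← List.take_append_drop (m - (n + 1)) w, word_append,
    mul_assoc, reversed _ (by rw [List.length_drop]; omega), mul_zero]

theorem eq_zero_of_ar_mul_eq_zero (hconn : Q.Connected) (hnd : ¬ Q.IsDynkin) {n : ℤ}
    {i j : Fin Q.r} {x : B} (hx : x ∈ S.corner ℬ n i j) (hsoc : ∀ a, S.ar a * x = 0) :
    x = 0 := by
  by_contra hx0
  rcases lt_or_ge n 0 with hn | hn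
  · rw [corner_eq_bot_of_neg hn] at hx
    exact hx0 hx
  lift n to ℕ using hn
  refine hnd (isDynkin_of_summable_recursion hconn (j := i)
    (d := fun m l ↦ finrank k (S.corner ℬ m l i)) (fun _ _ ↦ Nat.cast_nonneg _)
    (fun l ↦ summable_of_hasFiniteSupport ((Set.finite_Icc 0 (n : ℤ)).subset fun m hm ↦ ?_))
    fun m l ↦ mod_cast hS.sum_finrank_le m l i)
  contrapose! hm
  rw [Function.mem_support, not_not]
  suffices S.corner ℬ m l i = ⊥ by rw [this, finrank_bot, Nat.cast_zero]
  rcases lt_or_ge m 0 with hm0 | hm0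
  · exact corner_eq_bot_of_neg hm0 l i
  · lift m to ℕ using hm0
    exact hS.corner_eq_bot (fun w ↦ hS.e_mul_word_eq_zero hx hx0 hsoc) (by simpa using hm) l

lemma meshMap_injective (hconn : Q.Connected) (hnd : ¬ Q.IsDynkin) (n : ℤ) (i j : Fin Q.r) :
    Function.Injective (S.meshMap ℬ n i j) := by
  rw [injective_iff_map_eq_zero]
  intro p h
  refine Subtype.ext (hS.eq_zero_of_ar_mul_eq_zero hconn hnd p.2 fun a ↦ ?_)
  rw [← (mem_corner_iff.1 p.2).2.1, ← mul_assoc, ar_mul_e_eq]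
  split_ifs with ha
  · have := congrArg Subtype.val (congrFun h ⟨a.swap, (dsrc_swap a).trans ha⟩)
    rw [coe_meshMap, Sum.swap_swap] at this
    have := congrArg (dsign k a.swap • ·) this
    simpa [smul_smul, dsign_mul_self] using this
  · exact zero_mul _

theorem finrank_corner_eq (hconn : Q.Connected) (hnd : ¬ Q.IsDynkin) (n : ℤ) (i j : Fin Q.r) :
    finrank k (S.corner ℬ n i j) + finrank k (S.corner ℬ (n - 2) i j)
      = ∑ a : Out i, finrank k (S.corner ℬ (n - 1) (dtgt a.1) j)
        + if n = 0 ∧ i = j then 1 else 0 := by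
  have := hS.finite
  rcases eq_or_ne n 0 with rfl | hn
  · have h {m : ℤ} (hm : m < 0) (l : Fin Q.r) : finrank k (S.corner ℬ m l j) = 0 := by
      rw [corner_eq_bot_of_neg hm, finrank_bot]
    simp [h, hS.finrank_corner_zero]
  · have := finrank_eq_add_of_shortExact _ _ (hS.arrowMap_surjective hn i j)
      (le_antisymm (hS.ker_arrowMap_le n i j)
        (LinearMap.range_le_ker_iff.2 (hS.arrowMap_comp_meshMap n i j)))
      (hS.meshMap_injective hconn hnd n i j)
    rw [finrank_pi_fintype] at this
    simp [hn, this]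

end IsPreprojective

end ArrowSystem

/-- Elements of a `k`-algebra satisfying the defining relations of the quiver Heisenberg algebra
`ᵛΛ(Q)`; equivalently, a homomorphism from `ᵛΛ(Q)`. The Heisenberg relations at the individual
vertices are summed up into a single one. -/
structure HeisenbergRep {k : Type*} [Field k] {Q : FinQuiver} (v : Fin Q.r → k) (A : Type*)
    [Ring A] [Algebra k A] extends ArrowSystem Q A where
  z : A
  z_mul_e (i : Fin Q.r) : z * e i = e i * z
  z_mul_ar (a : Q.DArrow) : z * ar a = ar a * z
  mesh : ∑ a, dsign k a • (ar a * ar a.swap) = z * ∑ l, v l • e l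

namespace HeisenbergRep

section Mesh

variable {k : Type*} [Field k] {Q : FinQuiver} {v : Fin Q.r → k} {A : Type*} [Ring A] [Algebra k A]
  (R : HeisenbergRep v A)

lemma sum_out_mesh (i : Fin Q.r) :
    ∑ a : Out i, dsign k a.1 • (R.ar a.1 * R.ar a.1.swap) = v i • (R.z * R.e i) := by
  have mesh : R.e i * ∑ a, R.ar a * (dsign k a • R.ar a.swap)
      = R.e i * (R.z * ∑ l, v l • R.e l) := by
    simp only [mul_smul_comm, R.mesh]
  rw [R.e_mul_sum_ar_mul] at mesh
  simpa only [mul_smul_comm, Finset.mul_sum, ← mul_assoc, ← R.z_mul_e, mul_assoc R.z, R.e_mul_e,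
    mul_ite, mul_zero, smul_ite, smul_zero, Finset.sum_ite_eq, Finset.mem_univ, if_true] using mesh

end Mesh

section Lift

variable {k : Type} [Field k] {Q : FinQuiver} {v : Fin Q.r → k} {A : Type*} [Ring A] [Algebra k A]
  (R : HeisenbergRep v A)

/-- The values of a representation on the generators of `ᵛΛ(Q)`. -/
def gen : QHGen Q → A
  | .vert i => R.e i
  | .fwd α => R.ar (Sum.inl α)
  | .bwd α => R.ar (Sum.inr α)
  | .z => R.z

lemma mesh_at_vertex (i : Fin Q.r) :
    (∑ α, if Q.src α = i then R.ar (Sum.inl α) * R.ar (Sum.inr α) else 0)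
      - (∑ α, if Q.tgt α = i then R.ar (Sum.inr α) * R.ar (Sum.inl α) else 0)
      = v i • (R.z * R.e i) := by
  rw [← R.sum_out_mesh, sum_out_eq_add i fun a ↦ dsign k a • (R.ar a * R.ar a.swap),
    sub_eq_add_neg, ← Finset.sum_neg_distrib]
  simp only [dsign, Sum.elim_inl, Sum.elim_inr, Sum.swap_inl, Sum.swap_inr, one_smul, neg_smul,
    neg_ite, neg_zero]

lemma lift_gen_eq_of_rel ⦃x y : FreeAlgebra k (QHGen Q)⦄ (h : QHRel k Q v x y) :
    FreeAlgebra.lift k R.gen x = FreeAlgebra.lift k R.gen y := by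
  induction h with
  | vert_idem i => simpa [gen] using R.e_mul_e_self i
  | vert_orth i j h => simpa [gen] using R.idem.ortho h
  | vert_sum => simpa [gen] using R.sum_e
  | fwd_left α => simpa [gen, dsrc] using R.e_mul_ar (Sum.inl α)
  | fwd_right α => simpa [gen, dtgt] using R.ar_mul_e (Sum.inl α)
  | bwd_left α => simpa [gen, dsrc] using R.e_mul_ar (Sum.inr α)
  | bwd_right α => simpa [gen, dtgt] using R.ar_mul_e (Sum.inr α)
  | central g =>
    cases g with
    | vert i => simpa [gen] using R.z_mul_e i
    | fwd α => simpa [gen] using R.z_mul_ar (Sum.inl α)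
    | bwd α => simpa [gen] using R.z_mul_ar (Sum.inr α)
    | z => rfl
  | heisenberg i =>
    simpa [gen, qhMesh, apply_ite (FreeAlgebra.lift k R.gen)] using R.mesh_at_vertex i

/-- The homomorphism from the quiver Heisenberg algebra determined by a representation. -/
noncomputable def lift : QHAlg k Q v →ₐ[k] A :=
  RingQuot.liftAlgHom k ⟨FreeAlgebra.lift k R.gen, R.lift_gen_eq_of_rel⟩

lemma lift_qhGen (g : QHGen Q) : R.lift (qhGen k Q v g) = R.gen g := by
  simp [lift, qhGen]

end Lift

section Universal

variable {k : Type} [Field k] {Q : FinQuiver} {v : Fin Q.r → k} {A : Type} [Ring A] [Algebra k A]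

/-- `R` exhibits `A` as the quiver Heisenberg algebra. -/
structure IsUniversal (R : HeisenbergRep v A) : Prop where
  adjoin_eq_top : Algebra.adjoin k (Set.range R.gen) = ⊤
  exists_algHom : ∀ {B : Type} [Ring B] [Algebra k B] (S : HeisenbergRep v B),
    ∃ f : A →ₐ[k] B, ∀ g, f (R.gen g) = S.gen g

lemma IsUniversal.z_mul {R : HeisenbergRep v A} (hR : R.IsUniversal) (x : A) :
    R.z * x = x * R.z := by
  have le : Algebra.adjoin k (Set.range R.gen) ≤ Subalgebra.centralizer k {R.z} := by
    rw [Algebra.adjoin_le_iff]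
    rintro _ ⟨g, rfl⟩ _ rfl
    cases g with
    | vert i => exact R.z_mul_e i
    | fwd α => exact R.z_mul_ar (Sum.inl α)
    | bwd α => exact R.z_mul_ar (Sum.inr α)
    | z => rfl
  exact le (hR.adjoin_eq_top ▸ Algebra.mem_top) _ rfl

end Universal

section Taut

variable {k : Type} [Field k] {Q : FinQuiver} {v : Fin Q.r → k}

lemma lift_qhGen_eq_mkAlgHom :
    FreeAlgebra.lift k (qhGen k Q v) = RingQuot.mkAlgHom k (QHRel k Q v) := by
  ext g
  simp [qhGen]

lemma lift_qhGen_eq_of_rel {x y : FreeAlgebra k (QHGen Q)} (h : QHRel k Q v x y) :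
    FreeAlgebra.lift k (qhGen k Q v) x = FreeAlgebra.lift k (qhGen k Q v) y := by
  rw [lift_qhGen_eq_mkAlgHom]
  exact RingQuot.mkAlgHom_rel k h

lemma qhGen_mesh_at_vertex (i : Fin Q.r) :
    (∑ α, if Q.src α = i then qhGen k Q v (.fwd α) * qhGen k Q v (.bwd α) else 0)
      - (∑ α, if Q.tgt α = i then qhGen k Q v (.bwd α) * qhGen k Q v (.fwd α) else 0)
      = v i • (qhGen k Q v .z * qhGen k Q v (.vert i)) := by
  simpa [qhMesh, apply_ite (FreeAlgebra.lift k (qhGen k Q v))] using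
    lift_qhGen_eq_of_rel (QHRel.heisenberg (k := k) (v := v) i)

variable (v)

/-- The tautological representation in the quiver Heisenberg algebra itself. -/
noncomputable def taut : HeisenbergRep v (QHAlg k Q v) where
  e i := qhGen k Q v (.vert i)
  ar := Sum.elim (fun α ↦ qhGen k Q v (.fwd α)) (fun α ↦ qhGen k Q v (.bwd α))
  z := qhGen k Q v .z
  idem :=
    { idem i := by
        simpa [IsIdempotentElem] using lift_qhGen_eq_of_rel (QHRel.vert_idem (k := k) (v := v) i)
      ortho i j h := by
        simpa using lift_qhGen_eq_of_rel (QHRel.vert_orth (k := k) (v := v) i j h)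
      complete := by
        simpa using lift_qhGen_eq_of_rel (QHRel.vert_sum (k := k) (v := v)) }
  e_mul_ar := by
    rintro (α | α)
    · simpa [dsrc] using lift_qhGen_eq_of_rel (QHRel.fwd_left (k := k) (v := v) α)
    · simpa [dsrc] using lift_qhGen_eq_of_rel (QHRel.bwd_left (k := k) (v := v) α)
  ar_mul_e := by
    rintro (α | α)
    · simpa [dtgt] using lift_qhGen_eq_of_rel (QHRel.fwd_right (k := k) (v := v) α)
    · simpa [dtgt] using lift_qhGen_eq_of_rel (QHRel.bwd_right (k := k) (v := v) α)
  z_mul_e i := by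
    simpa using lift_qhGen_eq_of_rel (QHRel.central (k := k) (v := v) (.vert i))
  z_mul_ar := by
    rintro (α | α)
    · simpa using lift_qhGen_eq_of_rel (QHRel.central (k := k) (v := v) (.fwd α))
    · simpa using lift_qhGen_eq_of_rel (QHRel.central (k := k) (v := v) (.bwd α))
  mesh := by
    simp only [Finset.mul_sum, mul_smul_comm, ← qhGen_mesh_at_vertex, Finset.sum_sub_distrib]
    rw [Finset.sum_comm, Finset.sum_comm (γ := Fin Q.r), sub_eq_add_neg, ← Finset.sum_neg_distrib]
    simp only [Finset.sum_ite_eq, Finset.mem_univ, if_true]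
    have smul_eq_neg (x : QHAlg k Q v) : (-1 : k) • x = -x := by exact neg_one_smul k x
    exact (Fintype.sum_sum_type _).trans <| congrArg₂ _
      (Finset.sum_congr rfl fun _ _ ↦ one_smul k _)
      (Finset.sum_congr rfl fun _ _ ↦ smul_eq_neg _)

lemma taut_gen (g : QHGen Q) : (taut v).gen g = qhGen k Q v g := by
  cases g <;> rfl

theorem isUniversal_taut : (taut v).IsUniversal where
  adjoin_eq_top := by
    rw [funext (taut_gen v)]
    change Algebra.adjoin k
      (Set.range (RingQuot.mkAlgHom k (QHRel k Q v) ∘ FreeAlgebra.ι k)) = ⊤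
    rw [Set.range_comp, ← AlgHom.map_adjoin, FreeAlgebra.adjoin_range_ι, Algebra.map_top,
      AlgHom.range_eq_top]
    exact RingQuot.mkAlgHom_surjective k _
  exists_algHom S := ⟨S.lift, fun g ↦ by rw [taut_gen, lift_qhGen]⟩

end Taut

/-- The representation `R` is compatible with the grading `𝒜`, in which `z` has degree `2`. -/
class IsGraded {k : Type*} [Field k] {Q : FinQuiver} {v : Fin Q.r → k} {A : Type*} [Ring A]
    [Algebra k A] (R : HeisenbergRep v A) (𝒜 : ℤ → Submodule k A) : Prop
    extends R.toArrowSystem.IsGraded 𝒜 where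
  z_mem : R.z ∈ 𝒜 2

section Grading

variable {k : Type} [Field k] {Q : FinQuiver} {v : Fin Q.r → k}

/-- The grading of `ᵛΛ(Q)` by path length, with `z` in degree `2`; it is indexed by `ℤ` so that
degrees can be shifted down freely. -/
abbrev tautPiece (v : Fin Q.r → k) : ℤ → Submodule k (QHAlg k Q v) :=
  presentedPiece (fun g ↦ (qhWt Q g : ℤ)) (QHRel k Q v)

variable (k) in
/-- The grading of the free algebra on the generators of `ᵛΛ(Q)` inducing `tautPiece`. -/
abbrev freePiece (Q : FinQuiver) : ℤ → Submodule k (FreeAlgebra k (QHGen Q)) :=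
  monomialSpan k (fun g ↦ (qhWt Q g : ℤ)) (FreeAlgebra.ι k)

lemma ι_mem_freePiece {g : QHGen Q} {n : ℤ} (hn : qhWt Q g = n) :
    FreeAlgebra.ι k g ∈ freePiece k Q n :=
  hn ▸ mem_monomialSpan (wt := fun g ↦ (qhWt Q g : ℤ)) g

lemma ι_mul_ι_mem_freePiece {g h : QHGen Q} {n : ℤ} (hn : qhWt Q g + qhWt Q h = n) :
    FreeAlgebra.ι k g * FreeAlgebra.ι k h ∈ freePiece k Q n :=
  hn ▸ SetLike.mul_mem_graded (ι_mem_freePiece rfl) (ι_mem_freePiece rfl)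

lemma exists_mem_freePiece_of_rel {x y : FreeAlgebra k (QHGen Q)} (h : QHRel k Q v x y) :
    ∃ n, x ∈ freePiece k Q n ∧ y ∈ freePiece k Q n := by
  cases h with
  | vert_idem i => exact ⟨0, ι_mul_ι_mem_freePiece rfl, ι_mem_freePiece rfl⟩
  | vert_orth i j _ => exact ⟨0, ι_mul_ι_mem_freePiece rfl, zero_mem _⟩
  | vert_sum => exact ⟨0, sum_mem fun i _ ↦ ι_mem_freePiece rfl, SetLike.GradedOne.one_mem⟩
  | fwd_left α => exact ⟨1, ι_mul_ι_mem_freePiece rfl, ι_mem_freePiece rfl⟩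
  | fwd_right α => exact ⟨1, ι_mul_ι_mem_freePiece rfl, ι_mem_freePiece rfl⟩
  | bwd_left α => exact ⟨1, ι_mul_ι_mem_freePiece rfl, ι_mem_freePiece rfl⟩
  | bwd_right α => exact ⟨1, ι_mul_ι_mem_freePiece rfl, ι_mem_freePiece rfl⟩
  | central g =>
    exact ⟨_, ι_mul_ι_mem_freePiece rfl, ι_mul_ι_mem_freePiece (add_comm _ _)⟩
  | heisenberg i =>
    refine ⟨2, sub_mem (sum_mem fun α _ ↦ ?_) (sum_mem fun α _ ↦ ?_),
      Submodule.smul_mem _ _ (ι_mul_ι_mem_freePiece rfl)⟩ <;> split_ifs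
    exacts [ι_mul_ι_mem_freePiece rfl, zero_mem _, ι_mul_ι_mem_freePiece rfl, zero_mem _]

noncomputable instance : GradedAlgebra (tautPiece v) :=
  presentedGradedAlgebra fun _ _ ↦ exists_mem_freePiece_of_rel

lemma qhGen_mem_tautPiece (g : QHGen Q) : qhGen k Q v g ∈ tautPiece v (qhWt Q g) :=
  mem_monomialSpan (wt := fun g ↦ (qhWt Q g : ℤ)) g

instance : (taut v).IsGraded (tautPiece v) where
  e_mem i := qhGen_mem_tautPiece (.vert i)
  ar_mem := by
    rintro (α | α)
    exacts [qhGen_mem_tautPiece (.fwd α), qhGen_mem_tautPiece (.bwd α)]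
  z_mem := qhGen_mem_tautPiece .z
  eq_bot {n} hn := by
    rw [tautPiece, presentedPiece, monomialSpan, Submodule.span_eq_bot]
    rintro _ ⟨l, hl, -⟩
    exact absurd (List.sum_nonneg (l := l.map fun g ↦ (qhWt Q g : ℤ)) (by simp)) (by omega)

lemma tautPiece_natCast (n : ℕ) : tautPiece v n = qhPiece k Q v n := by
  have wt_sum (l : List (QHGen Q)) : (l.map fun g ↦ (qhWt Q g : ℤ)).sum = (l.map (qhWt Q)).sum := by
    rw [Nat.cast_list_sum, List.map_map]
    rfl
  simp only [tautPiece, presentedPiece, monomialSpan, qhPiece, wt_sum, Nat.cast_inj]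
  rfl

end Grading

section Model

variable {k : Type*} [Field k] {Q : FinQuiver} {v : Fin Q.r → k} {A : Type*} [Ring A] [Algebra k A]
  (R : HeisenbergRep v A)

/-- The element `∑ v_l e_l`. -/
def weight : A := ∑ l, v l • R.e l

lemma e_mul_weight (i : Fin Q.r) : R.e i * R.weight = v i • R.e i := by
  simp [weight, Finset.mul_sum, R.e_mul_e]

lemma weight_mul_e (i : Fin Q.r) : R.weight * R.e i = v i • R.e i := by
  simp [weight, Finset.sum_mul, R.e_mul_e]

/-- The presentation of `A` as a right module by the trivial paths, the arrows and `z`, with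
scalar coefficients for the trivial paths. -/
def genMap : (Fin Q.r → k) × (Q.DArrow → A) × A →ₗ[k] A where
  toFun s := ∑ l, s.1 l • R.e l + ∑ a, R.ar a * s.2.1 a + R.z * s.2.2
  map_add' s t := by
    simp only [Prod.fst_add, Prod.snd_add, Pi.add_apply, mul_add, add_smul,
      Finset.sum_add_distrib]
    abel
  map_smul' c s := by
    simp only [Prod.smul_fst, Prod.smul_snd, Pi.smul_apply, mul_smul_comm, smul_add, smul_assoc,
      RingHom.id_apply, Finset.smul_sum]

lemma genMap_apply (c : Fin Q.r → k) (y : Q.DArrow → A) (u : A) :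
    R.genMap (c, y, u) = ∑ l, c l • R.e l + ∑ a, R.ar a * y a + R.z * u := rfl

/-- The elements of the kernel of `genMap` which follow from the defining relations: the mesh
relation, the centrality of `z`, and `a = a e_{t(a)}`. -/
def syzygyMap : A × (Q.DArrow → A) × (Q.DArrow → A) →ₗ[k]
    (Fin Q.r → k) × (Q.DArrow → A) × A where
  toFun s := (0, fun a ↦ dsign k a • (R.ar a.swap * s.1) + R.z * s.2.1 a
      + (s.2.2 a - R.e (dtgt a) * s.2.2 a),
    -(R.weight * s.1) - ∑ a, R.ar a * s.2.1 a)
  map_add' s t := by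
    refine Prod.ext (add_zero _).symm (Prod.ext (funext fun a ↦ ?_) ?_) <;>
    simp only [Prod.fst_add, Prod.snd_add, Pi.add_apply, mul_add, smul_add,
      Finset.sum_add_distrib] <;> abel
  map_smul' c s := by
    refine Prod.ext (smul_zero _).symm (Prod.ext (funext fun a ↦ ?_) ?_) <;>
    simp only [Prod.smul_fst, Prod.smul_snd, Pi.smul_apply, mul_smul_comm, smul_add, smul_sub,
        smul_neg, Finset.smul_sum, RingHom.id_apply, smul_comm c (dsign k _)]

lemma syzygyMap_apply (p : A) (x w : Q.DArrow → A) :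
    R.syzygyMap (p, x, w) = (0, fun a ↦ dsign k a • (R.ar a.swap * p) + R.z * x a
      + (w a - R.e (dtgt a) * w a), -(R.weight * p) - ∑ a, R.ar a * x a) := rfl

lemma range_syzygyMap_le_ker_genMap :
    LinearMap.range R.syzygyMap ≤ LinearMap.ker R.genMap := by
  rintro _ ⟨⟨p, x, w⟩, rfl⟩
  have target (a) : R.ar a * (w a - R.e (dtgt a) * w a) = 0 := by
    rw [mul_sub, ← mul_assoc, R.ar_mul_e, sub_self]
  have central (a) : R.ar a * (R.z * x a) = R.z * (R.ar a * x a) := by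
    rw [← mul_assoc, ← R.z_mul_ar, mul_assoc]
  have mesh : ∑ a, dsign k a • (R.ar a * (R.ar a.swap * p)) = R.z * (R.weight * p) := by
    simpa only [weight, Finset.sum_mul, smul_mul_assoc, mul_assoc] using congrArg (· * p) R.mesh
  rw [LinearMap.mem_ker, syzygyMap_apply, genMap_apply]
  simp only [Pi.zero_apply, zero_smul, Finset.sum_const_zero, mul_add, target, central,
    Finset.sum_add_distrib, mul_smul_comm, mesh, mul_sub, mul_neg, Finset.mul_sum]
  abel

/-- The action of `e_i` on the generators of the presentation. -/
def vertMap (i : Fin Q.r) : End k ((Fin Q.r → k) × (Q.DArrow → A) × A) :=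
  (LinearMap.single k (fun _ ↦ k) i ∘ₗ LinearMap.proj i).prodMap <|
    (LinearMap.pi fun a ↦ if dsrc a = i then LinearMap.proj a else 0).prodMap <|
      LinearMap.mulLeft k (R.e i)

lemma vertMap_apply (i : Fin Q.r) (c : Fin Q.r → k) (y : Q.DArrow → A) (u : A) :
    R.vertMap i (c, y, u)
      = (Pi.single i (c i), fun a ↦ if dsrc a = i then y a else 0, R.e i * u) := by
  refine Prod.ext rfl (Prod.ext (funext fun a ↦ ?_) rfl)
  by_cases h : dsrc a = i <;> simp [vertMap, h]

lemma vertMap_mul_vertMap (i j : Fin Q.r) :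
    R.vertMap i * R.vertMap j = if i = j then R.vertMap i else 0 := by
  refine LinearMap.ext fun ⟨c, y, u⟩ ↦ ?_
  rw [End.mul_apply, vertMap_apply, vertMap_apply]
  split_ifs with h
  · subst h
    simp [vertMap_apply, ← mul_assoc, R.e_mul_e_self, ← ite_and]
  · refine Prod.ext (by simp [h]) (Prod.ext (funext fun a ↦ ?_) ?_)
    · by_cases ha : dsrc a = i <;> simp [ha, h]
    · simp [← mul_assoc, R.e_mul_e, h]

lemma sum_vertMap : ∑ i, R.vertMap i = 1 := by
  refine LinearMap.ext fun ⟨c, y, u⟩ ↦ ?_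
  simp only [LinearMap.sum_apply, vertMap_apply, End.one_apply]
  refine Prod.ext ?_ (Prod.ext ?_ ?_)
  · rw [Prod.fst_sum]
    exact Finset.univ_sum_single c
  · ext a
    simp [Prod.snd_sum, Prod.fst_sum]
  · simp [Prod.snd_sum, ← Finset.sum_mul, R.sum_e]

lemma genMap_vertMap (i : Fin Q.r) (s : (Fin Q.r → k) × (Q.DArrow → A) × A) :
    R.genMap (R.vertMap i s) = R.e i * R.genMap s := by
  obtain ⟨c, y, u⟩ := s
  rw [vertMap_apply, genMap_apply, genMap_apply]
  simp only [mul_add, Finset.mul_sum, mul_smul_comm, R.e_mul_e, smul_ite, smul_zero,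
    Finset.sum_ite_eq, Finset.mem_univ, if_true, ← mul_assoc, R.e_mul_ar_eq, R.z_mul_e, ite_mul,
    zero_mul, mul_ite, mul_zero, Pi.single_apply, ite_smul, zero_smul, Finset.sum_ite_eq']

lemma range_syzygyMap_le_comap_vertMap (i : Fin Q.r) :
    LinearMap.range R.syzygyMap ≤ (LinearMap.range R.syzygyMap).comap (R.vertMap i) := by
  rintro _ ⟨⟨p, x, w⟩, rfl⟩
  refine ⟨(R.e i * p, fun a ↦ if dsrc a = i then x a else 0,
    fun a ↦ if dsrc a = i then w a else 0), ?_⟩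
  rw [syzygyMap_apply, syzygyMap_apply, vertMap_apply]
  refine Prod.ext (by simp) (Prod.ext (funext fun a ↦ ?_) ?_)
  · simp only [← mul_assoc, R.ar_mul_e_eq, dtgt_swap]
    split_ifs <;> simp
  · simp only [← mul_assoc, weight_mul_e, mul_sub, mul_neg, e_mul_weight, Finset.mul_sum,
      R.e_mul_ar_eq, mul_ite, ite_mul, mul_zero, zero_mul]

/-- The right module with the generators of `genMap` and the relations of `syzygyMap`, on which the
generators of `ᵛΛ(Q)` act as they do on `A`. -/
abbrev Model : Type _ :=
  ((Fin Q.r → k) × (Q.DArrow → A) × A) ⧸ LinearMap.range R.syzygyMap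

/-- The comparison map from the model to the algebra. -/
def modelMap : R.Model →ₗ[k] A :=
  (LinearMap.range R.syzygyMap).liftQ R.genMap R.range_syzygyMap_le_ker_genMap

lemma modelMap_mk (s : (Fin Q.r → k) × (Q.DArrow → A) × A) :
    R.modelMap (Submodule.Quotient.mk s) = R.genMap s := rfl

/-- The action of `e_i` on the model. -/
def modelE (i : Fin Q.r) : End k R.Model :=
  Submodule.mapQ _ _ (R.vertMap i) (R.range_syzygyMap_le_comap_vertMap i)

lemma modelE_mk (i : Fin Q.r) (s : (Fin Q.r → k) × (Q.DArrow → A) × A) :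
    R.modelE i (Submodule.Quotient.mk s) = Submodule.Quotient.mk (R.vertMap i s) := rfl

/-- The action of `z` on the model. -/
def modelZ : End k R.Model :=
  Submodule.mkQ _ ∘ₗ LinearMap.inr k _ _ ∘ₗ LinearMap.inr k _ _ ∘ₗ R.modelMap

lemma modelZ_apply (t : R.Model) :
    R.modelZ t = Submodule.Quotient.mk (0, 0, R.modelMap t) := rfl

open scoped Classical in
/-- The action of an arrow on the model. -/
noncomputable def modelAr (a : Q.DArrow) : End k R.Model :=
  Submodule.mkQ _ ∘ₗ LinearMap.inr k _ _ ∘ₗ LinearMap.inl k _ _ ∘ₗ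
    LinearMap.single k (fun _ ↦ A) a ∘ₗ R.modelMap

open scoped Classical in
lemma modelAr_apply (a : Q.DArrow) (t : R.Model) :
    R.modelAr a t = Submodule.Quotient.mk (0, Pi.single a (R.modelMap t), 0) := rfl

lemma modelMap_modelE (i : Fin Q.r) (t : R.Model) :
    R.modelMap (R.modelE i t) = R.e i * R.modelMap t := by
  induction t using Submodule.Quotient.induction_on with | H s => ?_
  exact R.genMap_vertMap i s

lemma modelMap_modelZ (t : R.Model) : R.modelMap (R.modelZ t) = R.z * R.modelMap t := by
  simp [modelZ_apply, modelMap_mk, genMap_apply]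

lemma modelMap_modelAr (a : Q.DArrow) (t : R.Model) :
    R.modelMap (R.modelAr a t) = R.ar a * R.modelMap t := by
  classical
  simp [modelAr_apply, modelMap_mk, genMap_apply, Pi.single_apply, -Fintype.sum_sum_type]

variable {R} in
lemma model_mk_eq_mk {s t : (Fin Q.r → k) × (Q.DArrow → A) × A} (p : A) (x w : Q.DArrow → A)
    (h : R.syzygyMap (p, x, w) = s - t) :
    (Submodule.Quotient.mk s : R.Model) = Submodule.Quotient.mk t :=
  (Submodule.Quotient.eq _).mpr ⟨_, h⟩

lemma completeOrthogonalIdempotents_modelE : CompleteOrthogonalIdempotents R.modelE where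
  idem i := Submodule.linearMap_qext _ <| LinearMap.ext fun s ↦ congrArg Submodule.Quotient.mk <| by
    simpa using LinearMap.congr_fun (R.vertMap_mul_vertMap i i) s
  ortho i j h := Submodule.linearMap_qext _ <| LinearMap.ext fun s ↦
    congrArg Submodule.Quotient.mk <| by
      simpa [h] using LinearMap.congr_fun (R.vertMap_mul_vertMap i j) s
  complete := Submodule.linearMap_qext _ <| LinearMap.ext fun s ↦ by
    have sum_eq := congrArg (Submodule.mkQ (LinearMap.range R.syzygyMap))
      (LinearMap.congr_fun R.sum_vertMap s)
    rw [LinearMap.sum_apply, map_sum] at sum_eq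
    simpa [LinearMap.sum_apply, modelE_mk] using sum_eq

lemma modelE_mul_modelAr (a : Q.DArrow) : R.modelE (dsrc a) * R.modelAr a = R.modelAr a := by
  classical
  refine LinearMap.ext fun t ↦ congrArg Submodule.Quotient.mk ?_
  refine (R.vertMap_apply _ _ _ _).trans (Prod.ext (by simp) (Prod.ext (funext fun b ↦ ?_) ?_))
  · by_cases h : b = a
    · simp [h]
    · simp [h]
  · simp

lemma modelAr_mul_modelE (a : Q.DArrow) : R.modelAr a * R.modelE (dtgt a) = R.modelAr a := by
  classical
  refine LinearMap.ext fun t ↦ ?_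
  rw [End.mul_apply, modelAr_apply, modelAr_apply, modelMap_modelE]
  refine model_mk_eq_mk 0 0 (-Pi.single a (R.modelMap t)) ?_
  rw [syzygyMap_apply]
  refine Prod.ext (by simp) (Prod.ext (funext fun b ↦ ?_) (by simp))
  by_cases h : b = a
  · subst h
    simp [sub_eq_neg_add, add_comm]
  · simp [h]

lemma modelZ_mul_modelE (i : Fin Q.r) : R.modelZ * R.modelE i = R.modelE i * R.modelZ := by
  refine LinearMap.ext fun t ↦ ?_
  rw [End.mul_apply, End.mul_apply, modelZ_apply, modelZ_apply, modelMap_modelE, modelE_mk,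
    vertMap_apply]
  simp only [Pi.zero_apply, Pi.single_zero, ite_self]
  rfl

lemma modelZ_mul_modelAr (a : Q.DArrow) : R.modelZ * R.modelAr a = R.modelAr a * R.modelZ := by
  classical
  refine LinearMap.ext fun t ↦ ?_
  rw [End.mul_apply, End.mul_apply, modelZ_apply, R.modelAr_apply a (R.modelZ t),
    modelMap_modelZ, modelMap_modelAr]
  refine model_mk_eq_mk 0 (-Pi.single a (R.modelMap t)) 0 ?_
  rw [syzygyMap_apply]
  refine Prod.ext (by simp) (Prod.ext (funext fun b ↦ ?_) ?_)
  · by_cases h : b = a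
    · subst h
      simp
    · simp [h]
  · simp [Pi.single_apply, -Fintype.sum_sum_type]

lemma modelMesh :
    ∑ a, dsign k a • (R.modelAr a * R.modelAr a.swap) = R.modelZ * ∑ l, v l • R.modelE l := by
  classical
  refine LinearMap.ext fun t ↦ ?_
  have weight_mul : R.modelMap ((∑ l, v l • R.modelE l) t) = R.weight * R.modelMap t := by
    simp [LinearMap.sum_apply, modelMap_modelE, weight, Finset.sum_mul]
  rw [End.mul_apply, modelZ_apply, weight_mul, LinearMap.sum_apply]
  simp only [LinearMap.smul_apply, End.mul_apply, R.modelAr_apply _ (R.modelAr _ t),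
    modelMap_modelAr, ← Submodule.Quotient.mk_smul]
  refine (map_sum (Submodule.mkQ _) _ _).symm.trans (model_mk_eq_mk (R.modelMap t) 0 0 ?_)
  rw [syzygyMap_apply]
  refine Prod.ext (by simp [Prod.fst_sum]) (Prod.ext (funext fun a ↦ ?_) ?_)
  · simp [Prod.fst_sum, Prod.snd_sum, Finset.sum_apply, Pi.single_apply, -Fintype.sum_sum_type]
  · simp [Prod.snd_sum]

/-- The model is a representation of the quiver Heisenberg algebra. -/
noncomputable def modelRep : HeisenbergRep v (End k R.Model) where
  e := R.modelE
  ar := R.modelAr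
  z := R.modelZ
  idem := R.completeOrthogonalIdempotents_modelE
  e_mul_ar := R.modelE_mul_modelAr
  ar_mul_e := R.modelAr_mul_modelE
  z_mul_e := R.modelZ_mul_modelE
  z_mul_ar := R.modelZ_mul_modelAr
  mesh := R.modelMesh

end Model

namespace IsUniversal

variable {k : Type} [Field k] {Q : FinQuiver} {v : Fin Q.r → k} {A : Type} [Ring A] [Algebra k A]
  {R : HeisenbergRep v A} (hR : R.IsUniversal)
include hR

lemma modelMap_act {f : A →ₐ[k] End k R.Model} (hf : ∀ g, f (R.gen g) = R.modelRep.gen g) (x : A) :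
    ∀ t, R.modelMap (f x t) = x * R.modelMap t := by
  have hx : x ∈ Algebra.adjoin k (Set.range R.gen) := hR.adjoin_eq_top ▸ Algebra.mem_top
  induction hx using Algebra.adjoin_induction with
  | mem x hx =>
    obtain ⟨g, rfl⟩ := hx
    intro t
    cases g with
    | vert i => rw [hf]; exact R.modelMap_modelE i t
    | fwd α => rw [hf]; exact R.modelMap_modelAr (Sum.inl α) t
    | bwd α => rw [hf]; exact R.modelMap_modelAr (Sum.inr α) t
    | z => rw [hf]; exact R.modelMap_modelZ t
  | algebraMap c => intro t; simp [Algebra.algebraMap_eq_smul_one]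
  | add x y _ _ hx hy => intro t; simp [hx, hy, add_mul]
  | mul x y _ _ hx hy => intro t; simp [hx, hy, mul_assoc]

-- Acting on the class of `1` splits the comparison map from the model.
lemma exists_modelMap_inverse : ∃ f : A →ₗ[k] R.Model,
    (∀ x, R.modelMap (f x) = x) ∧ ∀ t, f (R.modelMap t) = t := by
  classical
  obtain ⟨f, hf⟩ := hR.exists_algHom R.modelRep
  have map_e i : f (R.e i) = R.modelE i := hf (.vert i)
  have map_ar : ∀ a, f (R.ar a) = R.modelAr a :=
    Sum.rec (fun α ↦ hf (.fwd α)) (fun α ↦ hf (.bwd α))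
  have map_z : f R.z = R.modelZ := hf .z
  let one : R.Model := Submodule.Quotient.mk (1, 0, 0)
  have modelMap_one : R.modelMap one = 1 := by
    simp [one, modelMap_mk, genMap_apply, R.sum_e]
  have modelMap_act_one x : R.modelMap (f x one) = x := by
    rw [hR.modelMap_act hf, modelMap_one, mul_one]
  refine ⟨LinearMap.applyₗ one ∘ₗ f.toLinearMap, modelMap_act_one, fun t ↦ ?_⟩
  induction t using Submodule.Quotient.induction_on with | H s => ?_
  obtain ⟨c, y, u⟩ := s
  have act_e l : c l • R.modelE l one = Submodule.mkQ _ (Pi.single l (c l), 0, 0) := by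
    rw [modelE_mk, vertMap_apply, ← Submodule.Quotient.mk_smul]
    refine congrArg Submodule.Quotient.mk (Prod.ext ?_ (Prod.ext ?_ ?_))
    · rw [Prod.smul_fst, ← Pi.single_smul]; simp
    · ext a; simp
    · simp
  have act_ar a : R.modelAr a (f (y a) one) = Submodule.mkQ _ (0, Pi.single a (y a), 0) := by
    rw [R.modelAr_apply, modelMap_act_one]; rfl
  have act_z : R.modelZ (f u one) = Submodule.mkQ _ (0, 0, u) := by
    rw [R.modelZ_apply, modelMap_act_one]; rfl
  change f (R.modelMap (Submodule.Quotient.mk (c, y, u))) one = Submodule.mkQ _ (c, y, u)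
  rw [modelMap_mk, genMap_apply]
  simp only [map_add, map_sum, map_smul, map_mul, map_e, map_ar, map_z, LinearMap.add_apply,
    LinearMap.sum_apply, LinearMap.smul_apply, End.mul_apply, act_e, act_ar, act_z]
  simp only [← map_sum, ← map_add]
  congr 1
  refine Prod.ext ?_ (Prod.ext ?_ ?_)
  · simp [Prod.fst_sum, Finset.univ_sum_single c, -Fintype.sum_sum_type]
  · simp [Prod.fst_sum, Prod.snd_sum, Finset.univ_sum_single y, -Fintype.sum_sum_type]
  · simp [Prod.snd_sum, -Fintype.sum_sum_type]

theorem genMap_surjective : Function.Surjective R.genMap := by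
  obtain ⟨f, hf, -⟩ := hR.exists_modelMap_inverse
  intro x
  obtain ⟨s, hs⟩ := Submodule.Quotient.mk_surjective _ (f x)
  exact ⟨s, by rw [← hf x, ← hs, modelMap_mk]⟩

theorem ker_genMap_le_range_syzygyMap :
    LinearMap.ker R.genMap ≤ LinearMap.range R.syzygyMap := by
  obtain ⟨f, -, hf⟩ := hR.exists_modelMap_inverse
  intro s hs
  rw [← Submodule.Quotient.mk_eq_zero, ← hf (Submodule.Quotient.mk s), modelMap_mk,
    LinearMap.mem_ker.mp hs, map_zero]

theorem generates (x : A) : ∃ (c : Fin Q.r → k) (y : Q.DArrow → A) (u : A),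
    x = ∑ l, c l • R.e l + ∑ a, R.ar a * y a + R.z * u := by
  obtain ⟨⟨c, y, u⟩, rfl⟩ := hR.genMap_surjective x
  exact ⟨c, y, u, R.genMap_apply c y u⟩

theorem exact {c : Fin Q.r → k} {y : Q.DArrow → A} {u : A} (hy : ∀ a, R.e (dtgt a) * y a = y a)
    (h : ∑ l, c l • R.e l + ∑ a, R.ar a * y a + R.z * u = 0) :
    c = 0 ∧ ∃ (p : A) (x : Q.DArrow → A), (∀ a, y a = dsign k a • (R.ar a.swap * p) + R.z * x a) ∧
      u = -(R.weight * p) - ∑ a, R.ar a * x a := by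
  obtain ⟨⟨p, x, w⟩, hs⟩ := hR.ker_genMap_le_range_syzygyMap
    (LinearMap.mem_ker.mpr ((R.genMap_apply c y u).trans h))
  rw [syzygyMap_apply, Prod.mk.injEq, Prod.mk.injEq] at hs
  obtain ⟨hc, hy', hu⟩ := hs
  refine ⟨hc.symm, p, fun a ↦ R.e (dtgt a) * x a, fun a ↦ ?_, ?_⟩
  · rw [← hy a, ← hy']
    simp only [mul_add, mul_sub, mul_smul_comm, ← mul_assoc, R.e_mul_e_self, sub_self, add_zero,
      ← R.z_mul_e, ← dsrc_swap, R.e_mul_ar]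
  · rw [← hu]
    simp only [← mul_assoc, R.ar_mul_e]

end IsUniversal

end HeisenbergRep

namespace ArrowSystem

variable {k : Type*} [Field k] {Q : FinQuiver} {B C : Type*} [Ring B] [Algebra k B] [Ring C]
  [Algebra k C] (S : ArrowSystem Q B) (q : B →ₐ[k] C)

/-- The image of an arrow system under a homomorphism of algebras. -/
def map : ArrowSystem Q C where
  e i := q (S.e i)
  ar a := q (S.ar a)
  idem := S.idem.map q.toRingHom
  e_mul_ar a := by rw [← map_mul, S.e_mul_ar]
  ar_mul_e a := by rw [← map_mul, S.ar_mul_e]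

lemma word_map (w : List Q.DArrow) : (S.map q).word w = q (S.word w) := by
  rw [word, word, map_list_prod, List.map_map]
  rfl

variable (ℬ : ℤ → Submodule k B)

instance [S.IsGraded ℬ] : (S.map q).IsGraded fun n ↦ (ℬ n).map q.toLinearMap where
  e_mem i := Submodule.mem_map_of_mem (IsGraded.e_mem i)
  ar_mem a := Submodule.mem_map_of_mem (IsGraded.ar_mem a)
  eq_bot hn := by
    rw [IsGraded.eq_bot (S := S) (ℬ := ℬ) hn, Submodule.map_bot]

lemma corner_map (n : ℤ) (i j : Fin Q.r) :
    (S.map q).corner (fun n ↦ (ℬ n).map q.toLinearMap) n i j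
      = (S.corner ℬ n i j).map q.toLinearMap := by
  rw [corner, corner, ← Submodule.map_comp, ← Submodule.map_comp]
  congr 1
  ext x
  simp [map]

end ArrowSystem

namespace HeisenbergRep

open ArrowSystem

section Corner

variable {k : Type*} [Field k] {Q : FinQuiver} {v : Fin Q.r → k} {A : Type*} [Ring A] [Algebra k A]
  {R : HeisenbergRep v A} {𝒜 : ℤ → Submodule k A} [GradedAlgebra 𝒜] [R.IsGraded 𝒜]

variable (R) in
lemma proj_z_mul (n : ℤ) (x : A) :
    GradedAlgebra.proj 𝒜 n (R.z * x) = R.z * GradedAlgebra.proj 𝒜 (n - 2) x :=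
  proj_mul_of_left_mem IsGraded.z_mem n x

lemma z_mul_mem_corner {m n : ℤ} (h : m = n - 2) {i j : Fin Q.r} {x : A}
    (hx : x ∈ R.corner 𝒜 m i j) : R.z * x ∈ R.corner 𝒜 n i j := by
  subst h
  obtain ⟨hx, hix, hxj⟩ := mem_corner_iff.1 hx
  refine mem_corner_iff.2 ⟨?_, by rw [← mul_assoc, ← R.z_mul_e, mul_assoc, hix],
    by rw [mul_assoc, hxj]⟩
  simpa using SetLike.mul_mem_graded (IsGraded.z_mem (R := R)) hx

variable (R 𝒜) in
/-- Multiplication by `z`; the source degree is kept flexible as `n - 1 - 2` and `n - 2 - 1` are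
not definitionally equal. -/
def zMap {m n : ℤ} (h : m = n - 2) (i j : Fin Q.r) : R.corner 𝒜 m i j →ₗ[k] R.corner 𝒜 n i j :=
  (LinearMap.mulLeft k R.z).restrict fun _ ↦ z_mul_mem_corner h

lemma coe_zMap {m n : ℤ} (h : m = n - 2) (i j : Fin Q.r) (x : R.corner 𝒜 m i j) :
    (R.zMap 𝒜 h i j x : A) = R.z * x := rfl

lemma cornerProj_z_mul {m n : ℤ} (h : m = n - 2) (i j : Fin Q.r) (x : A) :
    R.cornerProj 𝒜 n i j (R.z * x) = R.zMap 𝒜 h i j (R.cornerProj 𝒜 m i j x) := by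
  subst h
  apply Subtype.ext
  rw [coe_zMap, coe_cornerProj, coe_cornerProj, proj_z_mul, mul_assoc R.z, ← mul_assoc (R.e i) R.z,
    ← R.z_mul_e, mul_assoc]

lemma cornerProj_weight_mul (n : ℤ) (i j : Fin Q.r) (x : A) :
    R.cornerProj 𝒜 n i j (R.weight * x) = v i • R.cornerProj 𝒜 n i j x := by
  have weight_mem : R.weight ∈ 𝒜 0 :=
    Submodule.sum_mem _ fun l _ ↦ Submodule.smul_mem _ _ (IsGraded.e_mem l)
  apply Subtype.ext
  rw [Submodule.coe_smul, coe_cornerProj, coe_cornerProj, proj_mul_of_left_mem weight_mem,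
    sub_zero, mul_assoc, ← mul_assoc, e_mul_weight, smul_mul_assoc]

variable (R 𝒜) in
/-- The map `(y, u) ↦ ∑ a y_a + z u`. -/
def resolutionMap₁ (n : ℤ) (i j : Fin Q.r) :
    ((a : Out i) → R.corner 𝒜 (n - 1) (dtgt a.1) j) × R.corner 𝒜 (n - 2) i j →ₗ[k]
      R.corner 𝒜 n i j :=
  (R.arrowMap 𝒜 n i j).coprod (R.zMap 𝒜 rfl i j)

variable (R 𝒜) in
/-- The map `(p, x) ↦ (± a* p + z x_a, - v_i p - ∑ a x_a)`. -/
def resolutionMap₂ (n : ℤ) (i j : Fin Q.r) :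
    R.corner 𝒜 (n - 2) i j × ((a : Out i) → R.corner 𝒜 (n - 2 - 1) (dtgt a.1) j) →ₗ[k]
      ((a : Out i) → R.corner 𝒜 (n - 1) (dtgt a.1) j) × R.corner 𝒜 (n - 2) i j :=
  ((R.meshMap 𝒜 n i j).coprod <| LinearMap.pi fun a ↦
      R.zMap 𝒜 (sub_right_comm n 2 1) (dtgt a.1) j ∘ₗ LinearMap.proj a).prod <|
    (-(v i • LinearMap.id)).coprod (-R.arrowMap 𝒜 (n - 2) i j)

variable (R 𝒜) in
/-- The map `p ↦ (z p, ∓ a* p)`. -/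
def resolutionMap₃ (n : ℤ) (i j : Fin Q.r) :
    R.corner 𝒜 (n - 2 - 2) i j →ₗ[k]
      R.corner 𝒜 (n - 2) i j × ((a : Out i) → R.corner 𝒜 (n - 2 - 1) (dtgt a.1) j) :=
  (R.zMap 𝒜 rfl i j).prod (-R.meshMap 𝒜 (n - 2) i j)

lemma resolutionMap₂_comp_resolutionMap₃ (n : ℤ) (i j : Fin Q.r) :
    R.resolutionMap₂ 𝒜 n i j ∘ₗ R.resolutionMap₃ 𝒜 n i j = 0 := by
  refine LinearMap.ext fun p ↦ Prod.ext (funext fun a ↦ Subtype.ext ?_) (Subtype.ext ?_)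
  · change dsign k a.1 • (R.ar a.1.swap * (R.z * p)) + R.z * -(dsign k a.1 • (R.ar a.1.swap * p))
      = (0 : A)
    rw [mul_neg, mul_smul_comm, ← mul_assoc, ← R.z_mul_ar, mul_assoc, add_neg_cancel]
  · have mesh : ∑ a : Out i, R.ar a.1 * -(dsign k a.1 • (R.ar a.1.swap * p))
        = -(v i • (R.z * p)) := by
      have := congrArg (· * (p : A)) (R.sum_out_mesh i)
      simp only [Finset.sum_mul, smul_mul_assoc, mul_assoc, (mem_corner_iff.1 p.2).2.1] at this
      simp only [mul_neg, Finset.sum_neg_distrib, mul_smul_comm, this]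
    change -(v i • (R.z * p)) + -(R.arrowMap 𝒜 (n - 2) i j
      (-R.meshMap 𝒜 (n - 2) i j p) : A) = 0
    rw [coe_arrowMap]
    exact (congrArg (_ + -·) mesh).trans (add_neg_cancel _)

end Corner

namespace IsUniversal

variable {k : Type} [Field k] {Q : FinQuiver} {v : Fin Q.r → k} {A : Type} [Ring A] [Algebra k A]
  {R : HeisenbergRep v A} (hR : R.IsUniversal) {𝒜 : ℤ → Submodule k A} [GradedAlgebra 𝒜]
  [R.IsGraded 𝒜]
include hR

lemma ker_resolutionMap₁_le (n : ℤ) (i j : Fin Q.r) :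
    LinearMap.ker (R.resolutionMap₁ 𝒜 n i j) ≤ LinearMap.range (R.resolutionMap₂ 𝒜 n i j) := by
  rintro ⟨y, u⟩ h
  have sum_eq : ∑ a : Out i, R.ar a.1 * y a + R.z * u = 0 := by
    rw [← coe_arrowMap, ← coe_zMap rfl]
    exact congrArg Subtype.val (LinearMap.mem_ker.1 h)
  obtain ⟨-, p, x, hp, hu⟩ := hR.exact (c := 0) (u := u)
    (R.e_mul_extend fun a ↦ (mem_corner_iff.1 (y a).2).2.1)
    (by simpa only [Pi.zero_apply, zero_smul, Finset.sum_const_zero, zero_add,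
      R.sum_ar_mul_extend] using sum_eq)
  refine ⟨(R.cornerProj 𝒜 (n - 2) i j p,
    fun a ↦ R.cornerProj 𝒜 (n - 2 - 1) (dtgt a.1) j (x a.1)),
    Prod.ext (funext fun a ↦ ?_) ?_⟩
  · change R.meshMap 𝒜 n i j (R.cornerProj 𝒜 (n - 2) i j p) a + R.zMap 𝒜 (sub_right_comm n 2 1)
      (dtgt a.1) j (R.cornerProj 𝒜 (n - 2 - 1) (dtgt a.1) j (x a.1)) = y a
    rw [meshMap_cornerProj, ← cornerProj_z_mul, ← map_add, ← hp,
      Subtype.val_injective.extend_apply, cornerProj_coe]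
  · change -(v i • R.cornerProj 𝒜 (n - 2) i j p) + -R.arrowMap 𝒜 (n - 2) i j
      (fun a ↦ R.cornerProj 𝒜 (n - 2 - 1) (dtgt a.1) j (x a.1)) = u
    rw [← cornerProj_weight_mul, ← cornerProj_sum_ar_mul, ← map_neg, ← sub_eq_add_neg, ← map_sub,
      ← hu, cornerProj_coe]

lemma corner_le_span_sup_range (n : ℤ) (i j : Fin Q.r) :
    R.corner 𝒜 n i j ≤ Submodule.span k {R.e i}
      ⊔ (LinearMap.range (R.resolutionMap₁ 𝒜 n i j)).map (R.corner 𝒜 n i j).subtype := by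
  intro x hx
  obtain ⟨c, y, u, h⟩ := hR.generates x
  have decomp : R.cornerProj 𝒜 n i j (∑ l, c l • R.e l)
      + R.resolutionMap₁ 𝒜 n i j (fun a ↦ R.cornerProj 𝒜 (n - 1) (dtgt a.1) j (y a.1),
        R.cornerProj 𝒜 (n - 2) i j u) = ⟨x, hx⟩ := by
    rw [resolutionMap₁, LinearMap.coprod_apply, ← cornerProj_sum_ar_mul, ← cornerProj_z_mul,
      ← map_add, ← map_add, ← add_assoc, ← h]
    exact cornerProj_coe ⟨x, hx⟩
  have eq : x = _ := congrArg Subtype.val decomp.symm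
  rw [eq, Submodule.coe_add, cornerProj_sum_smul_e]
  refine Submodule.add_mem_sup ?_ (Submodule.mem_map_of_mem (LinearMap.mem_range_self _ _))
  split_ifs
  exacts [Submodule.smul_mem _ _ (Submodule.mem_span_singleton_self _), Submodule.zero_mem _]

lemma finiteDimensional_corner (n : ℤ) (i j : Fin Q.r) :
    FiniteDimensional k (R.corner 𝒜 n i j) := by
  induction n using Int.strongRec (m := 0) generalizing i j with
  | lt n hn =>
    rw [corner_eq_bot_of_neg hn]
    infer_instance
  | ge n _ ih =>
    have (a : Out i) := ih (n - 1) (by omega) (dtgt a.1) j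
    have := ih (n - 2) (by omega) i j
    exact Submodule.finiteDimensional_of_le (hR.corner_le_span_sup_range n i j)

end IsUniversal

section Opposite

open MulOpposite

variable {k : Type*} [Field k] {Q : FinQuiver} {v : Fin Q.r → k} {A : Type*} [Ring A] [Algebra k A]
  (R : HeisenbergRep v A)

/-- The opposite representation, in which every arrow is exchanged with its reverse. -/
def opposite : HeisenbergRep v Aᵐᵒᵖ where
  e i := op (R.e i)
  ar a := op (R.ar a.swap)
  idem :=
    { idem i := by rw [IsIdempotentElem, ← op_mul, R.e_mul_e_self]
      ortho i j h := by
        change op _ * op _ = 0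
        rw [← op_mul, R.idem.ortho h.symm, op_zero]
      complete := by rw [← Finset.op_sum, R.sum_e, op_one] }
  e_mul_ar a := by rw [← op_mul, ← dtgt_swap, R.ar_mul_e]
  ar_mul_e a := by rw [← op_mul, ← dsrc_swap, R.e_mul_ar]
  z := op R.z
  z_mul_e i := by rw [← op_mul, ← op_mul, R.z_mul_e]
  z_mul_ar a := by rw [← op_mul, ← op_mul, R.z_mul_ar]
  mesh := by
    apply unop_injective
    simp only [Sum.swap_swap, unop_mul, unop_op, unop_smul, Finset.unop_sum]
    rw [R.mesh, Finset.mul_sum, Finset.sum_mul]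
    simp only [mul_smul_comm, smul_mul_assoc, R.z_mul_e]

end Opposite

section CentralQuotient

variable {k : Type*} [Field k] {Q : FinQuiver} {v : Fin Q.r → k} {A B : Type*} [Ring A]
  [Algebra k A] [Ring B] [Algebra k B]

/-- `q` exhibits `B` as the quotient of `A` by the ideal generated by `z`; for the quiver
Heisenberg algebra, `B` is the preprojective algebra. -/
structure IsCentralQuotient (R : HeisenbergRep v A) (q : A →ₐ[k] B) : Prop where
  surjective : Function.Surjective q
  map_eq_zero_iff (x : A) : q x = 0 ↔ ∃ u, x = R.z * u

namespace IsCentralQuotient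

variable {R : HeisenbergRep v A} {q : A →ₐ[k] B} (hq : R.IsCentralQuotient q)
include hq

lemma map_z_mul (u : A) : q (R.z * u) = 0 := (hq.map_eq_zero_iff _).2 ⟨u, rfl⟩

lemma isHomogeneous_ker (𝒜 : ℤ → Submodule k A) [GradedAlgebra 𝒜] [R.IsGraded 𝒜] :
    (RingHom.ker q).IsHomogeneous 𝒜 := by
  intro n x hx
  obtain ⟨u, rfl⟩ := (hq.map_eq_zero_iff x).1 hx
  exact (hq.map_eq_zero_iff _).2 ⟨_, R.proj_z_mul n u⟩

end IsCentralQuotient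

end CentralQuotient

namespace IsUniversal

variable {k : Type} [Field k] {Q : FinQuiver} {v : Fin Q.r → k} {A : Type} [Ring A] [Algebra k A]
  {R : HeisenbergRep v A} (hR : R.IsUniversal)
include hR

open MulOpposite in
lemma exists_mul_of_reverse (w : List Q.DArrow) (i : Fin Q.r)
    (h : ∃ u, R.e i * R.word w = R.z * u) :
    ∃ u, R.word (w.map Sum.swap).reverse * R.e i = R.z * u := by
  obtain ⟨f, hf⟩ := hR.exists_algHom R.opposite
  have map_ar : ∀ a, f (R.ar a) = op (R.ar a.swap) :=
    Sum.rec (fun α ↦ hf (.fwd α)) fun α ↦ hf (.bwd α)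
  have map_word (w : List Q.DArrow) : f (R.word w) = op (R.word (w.map Sum.swap).reverse) := by
    induction w with
    | nil => simp
    | cons a w ih => simp [map_ar, ih, word_append]
  obtain ⟨u, hu⟩ := h
  refine ⟨unop (f u), ?_⟩
  have map_hu := congrArg (unop ∘ f) hu
  simp only [Function.comp_apply, map_mul, map_word, unop_mul] at map_hu
  rw [hR.z_mul]
  exact (congrArg (_ * unop ·) (hf (.vert i))).symm.trans
    (map_hu.trans (congrArg (_ * unop ·) (hf .z)))

theorem exists_isCentralQuotient :
    ∃ (B : Type) (_ : Ring B) (_ : Algebra k B) (q : A →ₐ[k] B), R.IsCentralQuotient q := by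
  have : (Ideal.span {R.z}).IsTwoSided := by
    refine ⟨fun {a} b ha ↦ ?_⟩
    obtain ⟨c, rfl⟩ := Ideal.mem_span_singleton'.1 ha
    rw [mul_assoc, hR.z_mul, ← mul_assoc]
    exact Ideal.mem_span_singleton'.2 ⟨_, rfl⟩
  refine ⟨A ⧸ Ideal.span {R.z}, inferInstance, inferInstance, Ideal.Quotient.mkₐ k _,
    Ideal.Quotient.mkₐ_surjective k _, fun x ↦ ?_⟩
  rw [Ideal.Quotient.mkₐ_eq_mk, Ideal.Quotient.eq_zero_iff_mem, Ideal.mem_span_singleton']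
  simp only [hR.z_mul, eq_comm]

variable {B : Type*} [Ring B] [Algebra k B] {q : A →ₐ[k] B} (hq : R.IsCentralQuotient q)
  (𝒜 : ℤ → Submodule k A) [GradedAlgebra 𝒜] [R.IsGraded 𝒜]
include hq

theorem isPreprojective_map :
    (R.toArrowSystem.map q).IsPreprojective fun n ↦ (𝒜 n).map q.toLinearMap where
  finite n i j := by
    have := hR.finiteDimensional_corner (𝒜 := 𝒜) n i j
    rw [corner_map]
    infer_instance
  mesh := by
    have mesh := congrArg q R.mesh
    rw [hq.map_z_mul, map_sum] at mesh
    simp only [map_smul, map_mul] at mesh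
    exact mesh
  generates := hq.surjective.forall.2 fun x ↦ by
    obtain ⟨c, y, u, rfl⟩ := hR.generates x
    refine ⟨c, fun a ↦ q (y a), ?_⟩
    rw [map_add, hq.map_z_mul, add_zero]
    simp only [map_add, map_sum, map_smul, map_mul]
    rfl
  exact c y hy h := by
    choose x hx using fun a ↦ hq.surjective (y a)
    have map_e_mul (a : Q.DArrow) : q (R.e (dtgt a) * x a) = y a := by
      rw [map_mul, hx]
      exact hy a
    have map_sum_eq : q (∑ l, c l • R.e l + ∑ a, R.ar a * (R.e (dtgt a) * x a)) = 0 := by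
      simp only [map_add, map_sum, map_smul, map_mul q (R.ar _), map_e_mul]
      exact h
    obtain ⟨u, hu⟩ := (hq.map_eq_zero_iff _).1 map_sum_eq
    obtain ⟨hc, p, w, hp, -⟩ := hR.exact (c := c) (y := fun a ↦ R.e (dtgt a) * x a) (u := -u)
      (fun a ↦ by rw [← mul_assoc, R.e_mul_e_self]) (by rw [hu, mul_neg, add_neg_cancel])
    refine ⟨hc, q p, fun a ↦ ?_⟩
    rw [← map_e_mul, hp, map_add, hq.map_z_mul, add_zero, map_smul, map_mul]
    rfl
  reverse w i h := by
    rw [word_map] at h ⊢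
    have h' := (hq.map_eq_zero_iff _).1 ((map_mul q _ _).trans h)
    exact (map_mul q _ _).symm.trans
      ((hq.map_eq_zero_iff _).2 (hR.exists_mul_of_reverse w i h'))

end IsUniversal

namespace IsCentralQuotient

variable {k : Type*} [Field k] {Q : FinQuiver} {v : Fin Q.r → k} {A B : Type*} [Ring A]
  [Algebra k A] [Ring B] [Algebra k B] {R : HeisenbergRep v A} {q : A →ₐ[k] B}
  (hq : R.IsCentralQuotient q) {𝒜 : ℤ → Submodule k A} [GradedAlgebra 𝒜] [R.IsGraded 𝒜]
include hq

lemma ker_submoduleMap_corner (n : ℤ) (i j : Fin Q.r) :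
    LinearMap.ker (q.toLinearMap.submoduleMap (R.corner 𝒜 n i j))
      = LinearMap.range (R.zMap 𝒜 (n := n) rfl i j) := by
  ext x
  constructor
  · intro hx
    obtain ⟨u, hu⟩ := (hq.map_eq_zero_iff x).1 (congrArg Subtype.val (LinearMap.mem_ker.1 hx))
    exact ⟨R.cornerProj 𝒜 (n - 2) i j u, by rw [← cornerProj_z_mul, ← hu, cornerProj_coe]⟩
  · rintro ⟨u, rfl⟩
    exact LinearMap.mem_ker.2 (Subtype.ext (hq.map_z_mul _))

lemma finrank_corner_map_add_finrank_range (n : ℤ) (i j : Fin Q.r)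
    [FiniteDimensional k (R.corner 𝒜 n i j)] :
    finrank k ((R.map q).corner (fun n ↦ (𝒜 n).map q.toLinearMap) n i j)
        + finrank k (LinearMap.range (R.zMap 𝒜 (n := n) rfl i j))
      = finrank k (R.corner 𝒜 n i j) := by
  rw [corner_map, ← hq.ker_submoduleMap_corner,
    ← (q.toLinearMap.submoduleMap (R.corner 𝒜 n i j)).finrank_range_add_finrank_ker,
    LinearMap.range_eq_top.2 (q.toLinearMap.submoduleMap_surjective _), finrank_top]

end IsCentralQuotient

namespace IsUniversal

variable {k : Type} [Field k] {Q : FinQuiver} {v : Fin Q.r → k} {A : Type} [Ring A] [Algebra k A]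
  {R : HeisenbergRep v A} (hR : R.IsUniversal) {𝒜 : ℤ → Submodule k A} [GradedAlgebra 𝒜]
  [R.IsGraded 𝒜]
include hR

lemma finrank_resolution_le {n : ℤ} {i j : Fin Q.r}
    (hz : Function.Injective (R.zMap 𝒜 (n := n - 2) rfl i j)) :
    ∑ a : Out i, finrank k (R.corner 𝒜 (n - 1) (dtgt a.1) j)
        + finrank k (R.corner 𝒜 (n - 2 - 2) i j)
      ≤ finrank k (R.corner 𝒜 n i j)
        + ∑ a : Out i, finrank k (R.corner 𝒜 (n - 1 - 2) (dtgt a.1) j) := by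
  have := hR.finiteDimensional_corner (𝒜 := 𝒜)
  have le := finrank_add_finrank_le_of_exact _ _ _ (hR.ker_resolutionMap₁_le n i j)
    (resolutionMap₂_comp_resolutionMap₃ n i j) fun x y hxy ↦ hz (Prod.ext_iff.1 hxy).1
  rw [finrank_prod, finrank_prod, finrank_pi_fintype, finrank_pi_fintype] at le
  rw [sub_right_comm n 1 2]
  omega

variable {B : Type*} [Ring B] [Algebra k B] {q : A →ₐ[k] B} (hq : R.IsCentralQuotient q)
include hq

/- By induction `z` is injective in degrees below `n`, so the resolution bounds `finrank A_n` from
below by `finrank B_n + finrank A_{n-2}`; as `B = A / z A`, the reverse inequality always holds. -/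
theorem finrank_corner_eq_add (hconn : Q.Connected) (hnd : ¬ Q.IsDynkin) (n : ℤ)
    (i j : Fin Q.r) :
    finrank k (R.corner 𝒜 n i j)
      = finrank k ((R.map q).corner (fun n ↦ (𝒜 n).map q.toLinearMap) n i j)
        + finrank k (R.corner 𝒜 (n - 2) i j) := by
  have := hR.finiteDimensional_corner (𝒜 := 𝒜)
  let := mapGradedAlgebra 𝒜 hq.surjective (hq.isHomogeneous_ker 𝒜)
  induction n using Int.strongRec (m := 0) generalizing i j with
  | lt n hn =>
    rw [corner_eq_bot_of_neg hn, corner_eq_bot_of_neg hn, corner_eq_bot_of_neg (by omega),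
      finrank_bot, finrank_bot]
  | ge n hn ih =>
    have split_n := hq.finrank_corner_map_add_finrank_range (𝒜 := 𝒜) n i j
    have range_le := (R.zMap 𝒜 (n := n) rfl i j).finrank_range_le
    obtain rfl | hn0 := eq_or_ne n 0
    · have : finrank k (R.corner 𝒜 (0 - 2) i j) = 0 := by
        rw [corner_eq_bot_of_neg (by omega), finrank_bot]
      omega
    have z_injective : Function.Injective (R.zMap 𝒜 (n := n - 2) rfl i j) := by
      have split_sub := hq.finrank_corner_map_add_finrank_range (𝒜 := 𝒜) (n - 2) i j
      have rank_nullity := (R.zMap 𝒜 (n := n - 2) rfl i j).finrank_range_add_finrank_ker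
      have eq_sub := ih (n - 2) (by omega) i j
      rw [← LinearMap.ker_eq_bot, ← Submodule.finrank_eq_zero (R := k)]
      omega
    have resolution_le := hR.finrank_resolution_le z_injective
    have quotient_eq := (hR.isPreprojective_map hq 𝒜).finrank_corner_eq hconn hnd n i j
    have eq_sub := ih (n - 2) (by omega) i j
    simp only [ih (n - 1) (by omega), Finset.sum_add_distrib] at resolution_le
    simp only [hn0, false_and, if_false] at quotient_eq
    omega

end IsUniversal

end HeisenbergRep

section GeneratingMatrix

open PowerSeries

variable {ι S : Type*} [CommRing S] (P : ℤ → Matrix ι ι S)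

/-- The matrix of power series `∑ P n tⁿ`; the terms of negative index are ignored. -/
def generatingMatrix : Matrix ι ι S⟦X⟧ :=
  Matrix.of fun i j ↦ PowerSeries.mk fun n ↦ P n i j

lemma coeff_generatingMatrix (n : ℕ) (i j : ι) :
    coeff n (generatingMatrix P i j) = P n i j := by
  rw [generatingMatrix, Matrix.of_apply, coeff_mk]

lemma generatingMatrix_add (P' : ℤ → Matrix ι ι S) :
    generatingMatrix (P + P') = generatingMatrix P + generatingMatrix P' := by
  ext i j n
  simp [coeff_generatingMatrix]

lemma generatingMatrix_sub (P' : ℤ → Matrix ι ι S) :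
    generatingMatrix (P - P') = generatingMatrix P - generatingMatrix P' := by
  ext i j n
  simp [coeff_generatingMatrix]

lemma X_pow_smul_generatingMatrix (hP : ∀ n < 0, P n = 0) (d : ℕ) :
    (X ^ d : S⟦X⟧) • generatingMatrix P = generatingMatrix fun n ↦ P (n - d) := by
  ext i j n
  rw [coeff_generatingMatrix, Matrix.smul_apply, smul_eq_mul, coeff_X_pow_mul']
  split_ifs with h
  · rw [coeff_generatingMatrix, Nat.cast_sub h]
  · rw [hP _ (by omega), Matrix.zero_apply]

lemma map_natCast_mul_generatingMatrix [Fintype ι] (M : Matrix ι ι ℕ) :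
    M.map (Nat.cast : ℕ → S⟦X⟧) * generatingMatrix P
      = generatingMatrix fun n ↦ M.map Nat.cast * P n := by
  ext i j n
  simp only [Matrix.mul_apply, coeff_generatingMatrix, map_sum, Matrix.map_apply]
  refine Finset.sum_congr rfl fun l _ ↦ ?_
  rw [← map_natCast (PowerSeries.C (R := S)), coeff_C_mul, coeff_generatingMatrix]

lemma generatingMatrix_ite_eq_one [DecidableEq ι] :
    generatingMatrix (fun n ↦ if n = 0 then (1 : Matrix ι ι S) else 0) = 1 := by
  ext i j n
  rw [coeff_generatingMatrix, Matrix.one_apply, apply_ite (coeff n), coeff_one, map_zero]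
  by_cases hn : n = 0 <;> simp [hn, Matrix.one_apply]

end GeneratingMatrix

section HilbertMatrix

open PowerSeries

namespace ArrowSystem

variable {k : Type*} [Field k] {Q : FinQuiver} {B : Type*} [Ring B] [Algebra k B]
  (S : ArrowSystem Q B) (ℬ : ℤ → Submodule k B)

/-- The matrix with entries `dim e_i B_n e_j`, read in `k`. -/
noncomputable def dimMatrix (n : ℤ) : Matrix (Fin Q.r) (Fin Q.r) k :=
  Matrix.of fun i j ↦ (finrank k (S.corner ℬ n i j) : k)

/-- The matrix Hilbert series `∑ dim (e_i B_n e_j) tⁿ`. -/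
noncomputable def hilbertMatrix : Matrix (Fin Q.r) (Fin Q.r) k⟦X⟧ :=
  generatingMatrix (S.dimMatrix ℬ)

variable {S ℬ}

lemma dimMatrix_of_neg [S.IsGraded ℬ] {n : ℤ} (hn : n < 0) : S.dimMatrix ℬ n = 0 := by
  ext i j
  rw [dimMatrix, Matrix.of_apply, corner_eq_bot_of_neg hn, finrank_bot, Nat.cast_zero,
    Matrix.zero_apply]

namespace IsPreprojective

variable [GradedAlgebra ℬ] [S.IsGraded ℬ] (hS : S.IsPreprojective ℬ) (hconn : Q.Connected)
  (hnd : ¬ Q.IsDynkin)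
include hS hconn hnd

lemma dimMatrix_sub_add (n : ℤ) :
    S.dimMatrix ℬ n - Q.doubleAdj.map Nat.cast * S.dimMatrix ℬ (n - 1) + S.dimMatrix ℬ (n - 2)
      = if n = 0 then 1 else 0 := by
  ext i j
  have recursion := congrArg (Nat.cast : ℕ → k) (hS.finrank_corner_eq hconn hnd n i j)
  have entry : (Q.doubleAdj.map (Nat.cast : ℕ → k) * S.dimMatrix ℬ (n - 1)) i j
      = ∑ a : Out i, (finrank k (S.corner ℬ (n - 1) (dtgt a.1) j) : k) := by
    rw [← sum_doubleAdj_smul (R := k) i fun l ↦ (finrank k (S.corner ℬ (n - 1) l j) : k),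
      Matrix.mul_apply]
    rfl
  have ite_entry : (if n = 0 then 1 else 0 : Matrix (Fin Q.r) (Fin Q.r) k) i j
      = if n = 0 ∧ i = j then 1 else 0 := by
    by_cases hn : n = 0 <;> simp [hn, Matrix.one_apply]
  push_cast at recursion
  rw [Matrix.add_apply, Matrix.sub_apply, entry, ite_entry, sub_add_eq_add_sub, sub_eq_iff_eq_add']
  exact recursion

theorem mul_hilbertMatrix_eq_one :
    (1 - (X : k⟦X⟧) • Q.doubleAdj.map (Nat.cast : ℕ → k⟦X⟧) + (X ^ 2 : k⟦X⟧) • 1)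
      * S.hilbertMatrix ℬ = 1 := by
  have X_smul : (X : k⟦X⟧) • S.hilbertMatrix ℬ
      = generatingMatrix fun n ↦ S.dimMatrix ℬ (n - 1) := by
    simpa [hilbertMatrix] using
      X_pow_smul_generatingMatrix _ (fun _ hn ↦ dimMatrix_of_neg (S := S) hn) 1
  calc
    _ = S.hilbertMatrix ℬ - Q.doubleAdj.map Nat.cast * (X : k⟦X⟧) • S.hilbertMatrix ℬ
          + (X ^ 2 : k⟦X⟧) • S.hilbertMatrix ℬ := by
      rw [add_mul, sub_mul, one_mul, smul_mul_assoc, smul_mul_assoc, one_mul, mul_smul_comm]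
    _ = generatingMatrix fun n ↦ S.dimMatrix ℬ n
          - Q.doubleAdj.map Nat.cast * S.dimMatrix ℬ (n - 1) + S.dimMatrix ℬ (n - 2) := by
      rw [X_smul, map_natCast_mul_generatingMatrix, hilbertMatrix,
        X_pow_smul_generatingMatrix _ (fun _ hn ↦ dimMatrix_of_neg hn),
        ← generatingMatrix_sub, ← generatingMatrix_add]
      rfl
    _ = 1 := by
      rw [funext (hS.dimMatrix_sub_add hconn hnd), generatingMatrix_ite_eq_one]

end IsPreprojective

end ArrowSystem

namespace HeisenbergRep

namespace IsUniversal

open ArrowSystem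

variable {k : Type} [Field k] {Q : FinQuiver} {v : Fin Q.r → k} {A : Type} [Ring A] [Algebra k A]
  {R : HeisenbergRep v A} (hR : R.IsUniversal) {𝒜 : ℤ → Submodule k A} [GradedAlgebra 𝒜]
  [R.IsGraded 𝒜] (hconn : Q.Connected) (hnd : ¬ Q.IsDynkin)
include hR hconn hnd

lemma one_sub_X_sq_smul_hilbertMatrix {B : Type*} [Ring B] [Algebra k B] {q : A →ₐ[k] B}
    (hq : R.IsCentralQuotient q) :
    (1 - X ^ 2 : k⟦X⟧) • R.hilbertMatrix 𝒜
      = (R.map q).hilbertMatrix fun n ↦ (𝒜 n).map q.toLinearMap := by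
  rw [sub_smul, one_smul, hilbertMatrix,
    X_pow_smul_generatingMatrix _ (fun _ hn ↦ dimMatrix_of_neg hn), ← generatingMatrix_sub]
  refine congrArg generatingMatrix (funext fun n ↦ Matrix.ext fun i j ↦ ?_)
  refine sub_eq_iff_eq_add.2 ?_
  exact (congrArg Nat.cast (hR.finrank_corner_eq_add hq hconn hnd n i j)).trans (Nat.cast_add _ _)

theorem mul_one_sub_X_sq_smul_hilbertMatrix_eq_one :
    (1 - (X : k⟦X⟧) • Q.doubleAdj.map (Nat.cast : ℕ → k⟦X⟧) + (X ^ 2 : k⟦X⟧) • 1)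
      * ((1 - X ^ 2 : k⟦X⟧) • R.hilbertMatrix 𝒜) = 1 := by
  obtain ⟨B, _, _, q, hq⟩ := hR.exists_isCentralQuotient
  let := mapGradedAlgebra 𝒜 hq.surjective (hq.isHomogeneous_ker 𝒜)
  rw [hR.one_sub_X_sq_smul_hilbertMatrix hconn hnd hq]
  exact (hR.isPreprojective_map hq 𝒜).mul_hilbertMatrix_eq_one hconn hnd

end IsUniversal

variable {k : Type} [Field k] {Q : FinQuiver} (v : Fin Q.r → k)

lemma qhCorner_eq (n : ℕ) (i j : Fin Q.r) :
    qhCorner k Q v n i j = (taut v).corner (tautPiece v) n i j := by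
  rw [ArrowSystem.corner, tautPiece_natCast]
  rfl

lemma qhHilb_eq : qhHilb k Q v = (taut v).hilbertMatrix (tautPiece v) := by
  ext i j n
  rw [ArrowSystem.hilbertMatrix, coeff_generatingMatrix, qhHilb, Matrix.of_apply, coeff_mk,
    qhCorner_eq, ArrowSystem.dimMatrix, Matrix.of_apply]

end HeisenbergRep

end HilbertMatrix

open HeisenbergRep in
theorem quiver_heisenberg_hilbert_series_non_dynkin_general
    (k : Type) [Field k] (Q : FinQuiver) (v : Fin Q.r → k) (hconn : Q.Connected)
    (hnd : ¬ Q.IsDynkin) :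
    (∀ (n : ℕ) (i j : Fin Q.r), FiniteDimensional k (qhCorner k Q v n i j)) ∧
    qhHilb k Q v *
      (1 - (PowerSeries.X : PowerSeries k) • (Q.doubleAdj.map (Nat.cast : ℕ → PowerSeries k))
        + (PowerSeries.X ^ 2 : PowerSeries k) •
            (1 : Matrix (Fin Q.r) (Fin Q.r) (PowerSeries k))) *
      ((1 - PowerSeries.X ^ 2 : PowerSeries k) •
            (1 : Matrix (Fin Q.r) (Fin Q.r) (PowerSeries k))) = 1 ∧
    ((1 - PowerSeries.X ^ 2 : PowerSeries k) •
            (1 : Matrix (Fin Q.r) (Fin Q.r) (PowerSeries k))) *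
      (1 - (PowerSeries.X : PowerSeries k) • (Q.doubleAdj.map (Nat.cast : ℕ → PowerSeries k))
        + (PowerSeries.X ^ 2 : PowerSeries k) •
            (1 : Matrix (Fin Q.r) (Fin Q.r) (PowerSeries k))) *
      qhHilb k Q v = 1 := by
  have hR := isUniversal_taut v
  have inverse := hR.mul_one_sub_X_sq_smul_hilbertMatrix_eq_one (𝒜 := tautPiece v) hconn hnd
  rw [← qhHilb_eq] at inverse
  refine ⟨fun n i j ↦ ?_, ?_, ?_⟩
  · rw [qhCorner_eq]
    exact hR.finiteDimensional_corner n i j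
  · rw [mul_smul_comm, mul_one, ← smul_mul_assoc]
    exact mul_eq_one_comm.1 inverse
  · rwa [smul_mul_assoc, one_mul, smul_mul_assoc, ← mul_smul_comm]

/-- **Hilbert series of the quiver Heisenberg algebra, non-Dynkin case.**
For a connected finite acyclic non-Dynkin quiver `Q` and any `v ∈ k^{Q₀}`,
the graded pieces of `ᵛΛ(Q)` are finite dimensional and
`h_{ᵛΛ}(t)·(1 - C t + t²·1)·(1 - t²) = 1` in the ring of `r × r` matrices over
`k[[t]]`; equivalently `h_{ᵛΛ}(t) = 1/((1 - C t + t²)(1 - t²))`. -/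
theorem quiver_heisenberg_hilbert_series_non_dynkin
    (k : Type) [Field k] (Q : FinQuiver) (v : Fin Q.r → k) (hr : 0 < Q.r)
    (hconn : Q.Connected) (hacyc : Q.Acyclic) (hnd : ¬ Q.IsDynkin) :
    (∀ (n : ℕ) (i j : Fin Q.r), FiniteDimensional k (qhCorner k Q v n i j)) ∧
    qhHilb k Q v *
      (1 - (PowerSeries.X : PowerSeries k) • (Q.doubleAdj.map (Nat.cast : ℕ → PowerSeries k))
        + (PowerSeries.X ^ 2 : PowerSeries k) •
            (1 : Matrix (Fin Q.r) (Fin Q.r) (PowerSeries k))) *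
      ((1 - PowerSeries.X ^ 2 : PowerSeries k) •
            (1 : Matrix (Fin Q.r) (Fin Q.r) (PowerSeries k))) = 1 ∧
    ((1 - PowerSeries.X ^ 2 : PowerSeries k) •
            (1 : Matrix (Fin Q.r) (Fin Q.r) (PowerSeries k))) *
      (1 - (PowerSeries.X : PowerSeries k) • (Q.doubleAdj.map (Nat.cast : ℕ → PowerSeries k))
        + (PowerSeries.X ^ 2 : PowerSeries k) •
            (1 : Matrix (Fin Q.r) (Fin Q.r) (PowerSeries k))) *
      qhHilb k Q v = 1 :=
  quiver_heisenberg_hilbert_series_non_dynkin_general k Q v hconn hnd
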